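/- Let γ : [a,b] → ℝ³ be a minimal inspection curve parametrized with constant speed. Then |γ(t)| ≥ 1 for all t, and for almost every t ∈ [a,b] (where γ is differentiable with γ′(t) ≠ 0) the tangent line {γ(t) + s·γ′(t) : s ∈ ℝ} is disjoint from the open unit ball; equivalently, ⟨γ(t), γ′(t)⟩² ≤ |γ′(t)|²·(|γ(t)|² − 1), i.e. the angle α(t) between γ(t) and γ′(t) satisfies α(t) ≥ arcsin(1/|γ(t)|). -/

import Mathlib

open MeasureTheory Set Real
open scoped ENNReal NNReal RealInnerProductSpace

noncomputable section

abbrev E3 := EuclideanSpace ℝ (Fin 3)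

/-- A closed rectifiable curve on `[a,b]` whose convex hull contains the unit sphere. -/
def IsInspection (a b : ℝ) (γ : ℝ → E3) : Prop :=
  a < b ∧ ContinuousOn γ (Set.Icc a b) ∧ γ a = γ b ∧ eVariationOn γ (Set.Icc a b) ≠ ⊤ ∧
    Metric.sphere (0 : E3) 1 ⊆ convexHull ℝ (γ '' Set.Icc a b)

/-- A minimal inspection curve: an inspection curve of least length. -/
def IsMinimalInspection (a b : ℝ) (γ : ℝ → E3) : Prop :=
  IsInspection a b γ ∧
    ∀ (c d : ℝ) (β : ℝ → E3), IsInspection c d β →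
      eVariationOn γ (Set.Icc a b) ≤ eVariationOn β (Set.Icc c d)

open Filter Topology InnerProductGeometry

/-!
Four semicircles make up a closed inspecting curve of length `4π`, so minimal inspection curves
are at most that long.

If such a curve entered the open unit ball, it could be approximated by closed inspecting polygons
based at a point `o` of the ball. Among these, one with the fewest vertices and then of least
length is critical: scaling up a vertex does not shorten it. A point travelling around a polygon
sees a moving spherical cap, which is empty at `o`, so every direction enters and leaves the cap and
the area swept is at least twice that of the sphere. Comparing the area swept along the edges with
the turning at the vertices of a critical polygon shows that its length exceeds `4π` by a fixed
amount, unless it has a sharp corner at `o`. But bypassing `o` leaves an inspecting polygon, so by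
minimality the two edges at `o` are nearly parallel.

Suppose now that a tangent ray at `γ t` meets the ball. Just after time `t` the curve lies strictly
between `γ t` and the ball, where it sees nothing that is not visible from `γ t`. By minimality it
follows a segment, which leads into the ball. Reversing the curve excludes the opposite ray.
-/

/-! ### Curves -/

section Curves

variable {X : Type*}

/-- The concatenation of `f` up to time `d` with `g` from time `c'` on, `g` being delayed so as to
start at time `d`. -/
def curveConcat (f g : ℝ → X) (d c' : ℝ) : ℝ → X :=
  fun t ↦ if t ≤ d then f t else g (t - d + c')

variable {f g : ℝ → X} {c d c' d' : ℝ}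

lemma curveConcat_eqOn_left : EqOn (curveConcat f g d c') f (Iic d) :=
  fun _ ht ↦ if_pos ht

lemma curveConcat_eqOn_right (hfg : f d = g c') :
    EqOn (curveConcat f g d c') (g ∘ fun t ↦ t - d + c') (Ici d) := by
  intro t ht
  rcases eq_or_lt_of_le (mem_Ici.1 ht) with rfl | h
  · simp [curveConcat, hfg]
  · simp [curveConcat, not_le.2 h]

lemma image_sub_add_Icc : (fun t ↦ t - d + c') '' Icc d (d + (d' - c')) = Icc c' d' := by
  rw [show (fun t ↦ t - d + c') = (· + (c' - d)) by funext t; ring, image_add_const_Icc]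
  congr 1 <;> ring

lemma image_curveConcat (hfg : f d = g c') (hcd : c ≤ d) (hcd' : c' ≤ d') :
    curveConcat f g d c' '' Icc c (d + (d' - c')) = f '' Icc c d ∪ g '' Icc c' d' := by
  rw [← Icc_union_Icc_eq_Icc hcd (by linarith), image_union,
    (curveConcat_eqOn_left.mono fun _ h ↦ h.2).image_eq,
    ((curveConcat_eqOn_right hfg).mono fun _ h ↦ h.1).image_eq, image_comp, image_sub_add_Icc]

variable [PseudoEMetricSpace X]

lemma continuousOn_curveConcat (hf : ContinuousOn f (Icc c d))
    (hg : ContinuousOn g (Icc c' d')) (hfg : f d = g c') (hcd : c ≤ d) (hcd' : c' ≤ d') :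
    ContinuousOn (curveConcat f g d c') (Icc c (d + (d' - c'))) := by
  rw [← Icc_union_Icc_eq_Icc hcd (by linarith)]
  refine (hf.congr (curveConcat_eqOn_left.mono fun _ h ↦ h.2)).union_of_isClosed
    (ContinuousOn.congr ?_ ((curveConcat_eqOn_right hfg).mono fun _ h ↦ h.1))
    isClosed_Icc isClosed_Icc
  exact hg.comp (by fun_prop) (mapsTo_iff_image_subset.2 image_sub_add_Icc.subset)

lemma eVariationOn_curveConcat (hfg : f d = g c') (hcd : c ≤ d) (hcd' : c' ≤ d') :
    eVariationOn (curveConcat f g d c') (Icc c (d + (d' - c'))) =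
      eVariationOn f (Icc c d) + eVariationOn g (Icc c' d') := by
  have hd : d ≤ d + (d' - c') := by linarith
  rw [← Icc_union_Icc_eq_Icc hcd hd, eVariationOn.union _ (isGreatest_Icc hcd) (isLeast_Icc hd),
    eVariationOn.congr (curveConcat_eqOn_left.mono fun _ h ↦ h.2),
    eVariationOn.congr ((curveConcat_eqOn_right hfg).mono fun _ h ↦ h.1),
    eVariationOn.comp_eq_of_monotoneOn _ _ (fun x _ y _ h ↦ by simpa using h), image_sub_add_Icc]

/-- `ArcThrough S p q ℓ`: some continuous curve from `p` to `q` of length at most `ℓ` visits all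
points of `S`. -/
def ArcThrough (S : Set X) (p q : X) (ℓ : ℝ≥0∞) : Prop :=
  ∃ (c d : ℝ) (f : ℝ → X), c ≤ d ∧ ContinuousOn f (Icc c d) ∧ f c = p ∧ f d = q ∧
    S ⊆ f '' Icc c d ∧ eVariationOn f (Icc c d) ≤ ℓ

namespace ArcThrough

variable {S T : Set X} {p q r : X} {ℓ m : ℝ≥0∞}

lemma of_continuousOn (hcd : c ≤ d) (hf : ContinuousOn f (Icc c d)) :
    ArcThrough (f '' Icc c d) (f c) (f d) (eVariationOn f (Icc c d)) :=
  ⟨c, d, f, hcd, hf, rfl, rfl, subset_rfl, le_rfl⟩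

lemma mono (h : ArcThrough S p q ℓ) (hT : T ⊆ S) (hm : ℓ ≤ m) : ArcThrough T p q m := by
  obtain ⟨c, d, f, hcd, hf, hp, hq, hS, hℓ⟩ := h
  exact ⟨c, d, f, hcd, hf, hp, hq, hT.trans hS, hℓ.trans hm⟩

lemma trans (hf : ArcThrough S p q ℓ) (hg : ArcThrough T q r m) :
    ArcThrough (S ∪ T) p r (ℓ + m) := by
  obtain ⟨c, d, f, hcd, hf, rfl, rfl, hS, hℓ⟩ := hf
  obtain ⟨c', d', g, hcd', hg, hfg, rfl, hT, hm⟩ := hg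
  refine ⟨c, d + (d' - c'), curveConcat f g d c', by linarith,
    continuousOn_curveConcat hf hg hfg.symm hcd hcd', curveConcat_eqOn_left hcd, ?_, ?_, ?_⟩
  · rw [curveConcat_eqOn_right hfg.symm (show d ≤ _ by linarith)]
    simp
  · rw [image_curveConcat hfg.symm hcd hcd']
    exact union_subset_union hS hT
  · rw [eVariationOn_curveConcat hfg.symm hcd hcd']
    exact add_le_add hℓ hm

lemma of_lipschitzOnWith {K : ℝ≥0} (hcd : c ≤ d) (hf : LipschitzOnWith K f (Icc c d)) :
    ArcThrough (f '' Icc c d) (f c) (f d) (K * ENNReal.ofReal (d - c)) := by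
  refine (of_continuousOn hcd hf.continuousOn).mono subset_rfl ?_
  simpa [eVariationOn_id_Icc] using hf.comp_eVariationOn_le (mapsTo_id _)

end ArcThrough

lemma ArcThrough.segment {E : Type*} [NormedAddCommGroup E] [NormedSpace ℝ E] (p q : E) :
    ArcThrough {p, q} p q (ENNReal.ofReal (dist p q)) := by
  have hlip : LipschitzWith (nndist p q) (AffineMap.lineMap p q : ℝ → E) :=
    lipschitzWith_lineMap p q
  refine ArcThrough.mono (by
    simpa using ArcThrough.of_lipschitzOnWith zero_le_one hlip.lipschitzOnWith) ?_ ?_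
  · rintro x (rfl | rfl)
    exacts [⟨0, by simp, by simp⟩, ⟨1, by simp, by simp⟩]
  · simp [edist_dist]

end Curves

/-! ### Inspecting sets and minimal curves -/

lemma isCompact_convexHull_of_finiteDimensional {E : Type*} [AddCommGroup E] [Module ℝ E]
    [TopologicalSpace E] [ContinuousAdd E] [ContinuousSMul ℝ E] [FiniteDimensional ℝ E] {S : Set E}
    (hS : IsCompact S) : IsCompact (convexHull ℝ S) := by
  let K (n : ℕ) : Set E := (fun z : (Fin n → ℝ) × (Fin n → E) ↦ ∑ i, z.1 i • z.2 i) ''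
    (stdSimplex ℝ (Fin n) ×ˢ univ.pi fun _ ↦ S)
  have hK (n : ℕ) : IsCompact (K n) :=
    ((isCompact_stdSimplex ℝ (Fin n)).prod (isCompact_univ_pi fun _ ↦ hS)).image (by fun_prop)
  suffices convexHull ℝ S = ⋃ n ∈ Iic (Module.finrank ℝ E + 1), K n from
    this ▸ (finite_Iic _).isCompact_biUnion fun n _ ↦ hK n
  apply subset_antisymm
  -- Carathéodory's theorem bounds the number of vertices needed.
  · intro x hx
    obtain ⟨ι, _, z, w, hzS, hz, hw, hw1, rfl⟩ := eq_pos_convex_span_of_mem_convexHull hx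
    let e := Fintype.equivFin ι
    refine mem_biUnion (hz.card_le_finrank_succ.trans (by gcongr; exact Submodule.finrank_le _))
      ⟨(w ∘ e.symm, z ∘ e.symm), ⟨⟨fun i ↦ (hw _).le, ?_⟩, fun i _ ↦ hzS (mem_range_self _)⟩, ?_⟩
    · rw [← hw1]
      exact e.symm.sum_comp w
    · exact e.symm.sum_comp fun i ↦ w i • z i
  · refine iUnion₂_subset fun n _ ↦ ?_
    rintro _ ⟨⟨w, z⟩, ⟨hw, hz⟩, rfl⟩
    exact (convex_convexHull ℝ S).sum_mem (fun i _ ↦ hw.1 i) hw.2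
      fun i _ ↦ subset_convexHull ℝ S (hz i (mem_univ i))

section Inspects

variable {E : Type*} [NormedAddCommGroup E] [InnerProductSpace ℝ E] {S T : Set E}

/-- Each point `u` of the unit sphere is visible from some point of `S`, i.e. some point of `S`
lies on or beyond the tangent plane of the sphere at `u`. -/
def Inspects (S : Set E) : Prop := ∀ u : E, ‖u‖ = 1 → ∃ x ∈ S, 1 ≤ ⟪x, u⟫

lemma Inspects.mono (hS : Inspects S) (h : S ⊆ T) : Inspects T := fun u hu ↦
  (hS u hu).imp fun _ hx ↦ ⟨h hx.1, hx.2⟩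

lemma sphere_subset_convexHull_iff_inspects [FiniteDimensional ℝ E] (hS : IsCompact S) :
    Metric.sphere (0 : E) 1 ⊆ convexHull ℝ S ↔ Inspects S := by
  refine ⟨fun h u hu ↦ ?_, fun h u hu ↦ ?_⟩
  · by_contra! hc
    have hlt : convexHull ℝ S ⊆ {x | ⟪x, u⟫ < 1} := by
      refine convexHull_min hc ?_
      simp_rw [real_inner_comm]
      exact convex_halfSpace_lt (innerSL ℝ u).isLinear 1
    have : ⟪u, u⟫ < 1 := hlt (h (by simpa using hu))
    simp [hu] at this
  · by_contra hc
    obtain ⟨f, s, hfs, hsf⟩ := geometric_hahn_banach_closed_point (convex_convexHull ℝ S)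
      (isCompact_convexHull_of_finiteDimensional hS).isClosed hc
    obtain ⟨v, rfl⟩ := (InnerProductSpace.toDual ℝ E).surjective f
    simp only [InnerProductSpace.toDual_apply_apply] at hfs hsf
    have hu : ‖u‖ = 1 := by simpa using hu
    have hv : v ≠ 0 := by
      rintro rfl
      obtain ⟨x, hx, -⟩ := h u hu
      simpa using (hfs x (subset_convexHull ℝ S hx)).trans hsf
    obtain ⟨x, hx, hvx⟩ := h (NormedSpace.normalize v) (by simpa using hv)
    have : ‖v‖ ≤ ⟪v, x⟫ := by
      rw [NormedSpace.normalize, real_inner_smul_right, real_inner_comm,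
        ← div_eq_inv_mul, one_le_div (norm_pos_iff.2 hv)] at hvx
      exact hvx
    have := real_inner_le_norm v u
    rw [hu, mul_one] at this
    linarith [hfs x (subset_convexHull ℝ S hx)]

lemma not_inspects_singleton [Nontrivial E] (p : E) : ¬ Inspects {p} := by
  intro h
  obtain ⟨u, hu⟩ := exists_norm_eq E zero_le_one
  obtain ⟨x, rfl, hx⟩ := h u hu
  obtain ⟨y, rfl, hy⟩ := h (-u) (by rwa [norm_neg])
  rw [inner_neg_right] at hy
  linarith

end Inspects

section Minimal

variable {a b : ℝ} {γ : ℝ → E3}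

lemma IsInspection.inspects (h : IsInspection a b γ) : Inspects (γ '' Icc a b) :=
  (sphere_subset_convexHull_iff_inspects (isCompact_Icc.image_of_continuousOn h.2.1)).1 h.2.2.2.2

namespace IsMinimalInspection

lemma length_le_of_arcThrough (h : IsMinimalInspection a b γ) {S : Set E3} {p : E3}
    {ℓ : ℝ≥0∞} (hS : Inspects S) (hA : ArcThrough S p p ℓ) : eVariationOn γ (Icc a b) ≤ ℓ := by
  obtain ⟨c, d, f, hcd, hf, rfl, hfd, hSf, hℓ⟩ := hA
  have hf_insp := hS.mono hSf
  have hcd' : c < d := by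
    refine hcd.lt_of_ne ?_
    rintro rfl
    rw [Icc_self, image_singleton] at hf_insp
    exact not_inspects_singleton _ hf_insp
  by_cases hfin : eVariationOn f (Icc c d) = ⊤
  · simp_all
  · exact (h.2 c d f ⟨hcd', hf, hfd.symm, hfin, (sphere_subset_convexHull_iff_inspects
      (isCompact_Icc.image_of_continuousOn hf)).2 hf_insp⟩).trans hℓ

lemma of_image_eq (h : IsMinimalInspection a b γ) {c d : ℝ} {β : ℝ → E3} (hcd : c < d)
    (hβ : ContinuousOn β (Icc c d)) (hclosed : β c = β d)
    (hlen : eVariationOn β (Icc c d) = eVariationOn γ (Icc a b))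
    (himage : β '' Icc c d = γ '' Icc a b) : IsMinimalInspection c d β :=
  ⟨⟨hcd, hβ, hclosed, hlen ▸ h.1.2.2.2.1, himage ▸ h.1.2.2.2.2⟩, fun _ _ _ hη ↦
    hlen ▸ h.2 _ _ _ hη⟩

lemma reverse (h : IsMinimalInspection a b γ) :
    IsMinimalInspection a b (γ ∘ fun t ↦ a + b - t) := by
  have himage : (fun t ↦ a + b - t) '' Icc a b = Icc a b := by simp
  refine h.of_image_eq h.1.1 ?_ ?_ ?_ ?_
  · exact h.1.2.1.comp (by fun_prop) (mapsTo_iff_image_subset.2 himage.subset)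
  · simpa using h.1.2.2.1.symm
  · rw [eVariationOn.comp_eq_of_antitoneOn _ _ (fun x _ y _ hxy ↦ sub_le_sub_left hxy _), himage]
  · rw [image_comp, himage]

lemma rotate (h : IsMinimalInspection a b γ) {t : ℝ} (ht : t ∈ Icc a b) :
    IsMinimalInspection t (b + (t - a)) (curveConcat γ γ b a) := by
  obtain ⟨⟨hab, hγ, hclosed, -⟩, -⟩ := id h
  have hsub₁ : Icc t b ⊆ Icc a b := Icc_subset_Icc_left ht.1
  have hsub₂ : Icc a t ⊆ Icc a b := Icc_subset_Icc_right ht.2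
  have hunion := Icc_union_Icc_eq_Icc ht.1 ht.2
  refine h.of_image_eq (by linarith [ht.2])
    (continuousOn_curveConcat (hγ.mono hsub₁) (hγ.mono hsub₂) hclosed.symm ht.2 ht.1) ?_ ?_ ?_
  · rw [curveConcat_eqOn_left ht.2,
      curveConcat_eqOn_right hclosed.symm (show b ≤ _ by linarith [ht.1])]
    simp
  · rw [eVariationOn_curveConcat hclosed.symm ht.2 ht.1, add_comm, ← hunion,
      eVariationOn.union _ (isGreatest_Icc ht.1) (isLeast_Icc ht.2)]
  · rw [image_curveConcat hclosed.symm ht.2 ht.1, union_comm, ← image_union, hunion]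

end IsMinimalInspection

end Minimal

/-! ### Tangent rays -/

section Shadow

variable {E : Type*} [NormedAddCommGroup E] [InnerProductSpace ℝ E] {p q : E}

/-- The cone over the open unit ball with apex `p`, without the apex: the points lying strictly
between `p` and some point of the ball. From there one sees no more of the sphere than from `p`. -/
def coneToBall (p : E) : Set E := {q | ∃ b ∈ Metric.ball (0 : E) 1, q ∈ openSegment ℝ p b}

lemma isOpen_coneToBall (p : E) : IsOpen (coneToBall p) := by
  have : coneToBall p = ⋃ r ∈ Ioo (0 : ℝ) 1, AffineMap.homothety p r '' Metric.ball (0 : E) 1 := by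
    ext q
    simp only [coneToBall, openSegment_eq_image_lineMap, mem_ofPred_eq, mem_iUnion, mem_image,
      AffineMap.homothety_eq_lineMap]
    tauto
  rw [this]
  exact isOpen_biUnion fun r hr ↦
    AffineMap.homothety_isOpenMap p r hr.1.ne' _ Metric.isOpen_ball

lemma self_notMem_coneToBall (hp : 1 ≤ ‖p‖) : p ∉ coneToBall p := by
  rintro ⟨b, hb, hpb⟩
  rw [left_mem_openSegment_iff] at hpb
  simp [← hpb, hp.not_gt] at hb

lemma one_le_inner_of_mem_coneToBall {u : E} (hq : q ∈ coneToBall p) (hu : ‖u‖ = 1)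
    (h : 1 ≤ ⟪q, u⟫) : 1 ≤ ⟪p, u⟫ := by
  obtain ⟨b, hb, r, s, hr, hs, hrs, rfl⟩ := hq
  have hbu : ⟪b, u⟫ < 1 := by
    refine (real_inner_le_norm b u).trans_lt ?_
    simpa [hu] using hb
  rw [inner_add_left, real_inner_smul_left, real_inner_smul_left] at h
  nlinarith

lemma wbtw_total_of_mem_openSegment {b x : E} (hxp : x ≠ p) (hxq : x ∈ segment ℝ p q)
    (hxb : x ∈ openSegment ℝ p b) : b ∈ segment ℝ p q ∨ q ∈ segment ℝ p b := by
  simp_rw [mem_segment_iff_wbtw] at hxq ⊢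
  have hxb := mem_segment_iff_wbtw.1 (openSegment_subset_segment ℝ p b hxb)
  refine wbtw_total_of_sameRay_vsub_left
    (hxb.sameRay_vsub_left.symm.trans hxq.sameRay_vsub_left fun h ↦ ?_)
  exact absurd (vsub_eq_zero_iff_eq.1 h) hxp

end Shadow

section Straight

variable {E : Type*} [NormedAddCommGroup E] [NormedSpace ℝ E] {f : ℝ → E} {c d : ℝ}

lemma mem_segment_of_eVariationOn_le_edist [StrictConvexSpace ℝ E] {z : ℝ}
    (h : eVariationOn f (Icc c d) ≤ edist (f c) (f d)) (hz : z ∈ Icc c d) :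
    f z ∈ segment ℝ (f c) (f d) := by
  rw [mem_segment_iff_wbtw, ← dist_add_dist_eq_iff]
  refine (dist_triangle _ _ _).antisymm' ?_
  have hle : edist (f c) (f z) + edist (f z) (f d) ≤ edist (f c) (f d) := by
    refine le_trans ?_ h
    rw [← univ_inter (Icc c d), ← eVariationOn.Icc_add_Icc f hz.1 hz.2 (mem_univ z)]
    simp_rw [univ_inter]
    exact add_le_add (eVariationOn.edist_le f (left_mem_Icc.2 hz.1) (right_mem_Icc.2 hz.1))
      (eVariationOn.edist_le f (left_mem_Icc.2 hz.2) (right_mem_Icc.2 hz.2))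
  simp_rw [edist_dist] at hle
  rwa [← ENNReal.ofReal_add dist_nonneg dist_nonneg,
    ENNReal.ofReal_le_ofReal_iff dist_nonneg] at hle

lemma segment_subset_image_of_mapsTo (hcd : c ≤ d) (hf : ContinuousOn f (Icc c d))
    (hseg : MapsTo f (Icc c d) (segment ℝ (f c) (f d))) :
    segment ℝ (f c) (f d) ⊆ f '' Icc c d := by
  intro b hb
  rw [segment_eq_image_lineMap] at hb hseg
  obtain ⟨r, hr, rfl⟩ := hb
  have hcont : ContinuousOn (fun z ↦ dist (f z) (f c)) (Icc c d) := by fun_prop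
  obtain ⟨z, hz, hdist⟩ := intermediate_value_Icc hcd hcont
    (show r * dist (f c) (f d) ∈ _ by
      rw [dist_self, dist_comm (f d)]
      exact ⟨mul_nonneg hr.1 dist_nonneg, mul_le_of_le_one_left dist_nonneg hr.2⟩)
  obtain ⟨r', hr', hz'⟩ := hseg hz
  refine ⟨z, hz, ?_⟩
  have hrr' : r' * dist (f c) (f d) = r * dist (f c) (f d) := calc
    _ = dist (f z) (f c) := by rw [← hz', dist_lineMap_left, Real.norm_of_nonneg hr'.1]
    _ = _ := hdist
  rw [← hz', ← dist_eq_zero, dist_lineMap_lineMap, dist_eq_norm, Real.norm_eq_abs,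
    ← abs_of_nonneg (dist_nonneg (x := f c) (y := f d)), ← abs_mul, sub_mul, hrr', sub_self,
    abs_zero]

end Straight

lemma exists_first_exit {X : Type*} [TopologicalSpace X] {f : ℝ → X} {c d : ℝ} {U : Set X}
    (hU : IsOpen U) (hcd : c < d) (hf : ContinuousOn f (Icc c d))
    (hstart : ∀ᶠ z in 𝓝[>] c, f z ∈ U) (hend : f d ∉ U) :
    ∃ y ∈ Ioc c d, f y ∉ U ∧ ∀ z ∈ Ioo c y, f z ∈ U := by
  obtain ⟨x, hx, hxU⟩ := mem_nhdsGT_iff_exists_Ioo_subset.1 hstart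
  have hx : c < x := hx
  have hdx : x ≤ d := not_lt.1 fun h ↦ hend (hxU ⟨hcd, h⟩)
  have hfx : ContinuousOn f (Icc x d) := hf.mono (Icc_subset_Icc_left hx.le)
  have hcompact : IsCompact (Icc x d ∩ f ⁻¹' Uᶜ) :=
    isCompact_Icc.of_isClosed_subset
      (hfx.preimage_isClosed_of_isClosed isClosed_Icc hU.isClosed_compl) inter_subset_left
  obtain ⟨y, ⟨hy, hyU⟩, hleast⟩ := hcompact.exists_isLeast ⟨d, right_mem_Icc.2 hdx, hend⟩
  refine ⟨y, ⟨hx.trans_le hy.1, hy.2⟩, hyU, fun z hz ↦ ?_⟩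
  by_contra hzU
  have hxz : x ≤ z := not_lt.1 fun h ↦ hzU (hxU ⟨hz.1, h⟩)
  exact hz.2.not_ge (hleast ⟨⟨hxz, hz.2.le.trans hy.2⟩, hzU⟩)

lemma eventually_mem_coneToBall_of_hasDerivWithinAt {E : Type*} [NormedAddCommGroup E]
    [InnerProductSpace ℝ E] {f : ℝ → E} {c s : ℝ} {v : E} (hf : HasDerivWithinAt f v (Ioi c) c)
    (hs : 0 < s) (hv : ‖f c + s • v‖ < 1) : ∀ᶠ z in 𝓝[>] c, f z ∈ coneToBall (f c) := by
  have hlim : Tendsto (fun z ↦ ‖f c + s • slope f c z‖) (𝓝[>] c) (𝓝 ‖f c + s • v‖) :=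
    ((((hasDerivWithinAt_iff_tendsto_slope' (by simp)).1 hf).const_smul s).const_add _).norm
  filter_upwards [hlim.eventually_lt_const hv, Ioo_mem_nhdsGT (lt_add_of_pos_right c hs)]
    with z hz hzc
  refine ⟨f c + s • slope f c z, by simpa using hz, ?_⟩
  have hz0 : z - c ≠ 0 := sub_ne_zero.2 hzc.1.ne'
  rw [openSegment_eq_image']
  refine ⟨(z - c) / s, ⟨div_pos (sub_pos.2 hzc.1) hs, ?_⟩, ?_⟩
  · rw [div_lt_one hs]
    linarith [hzc.2]
  · simp only [slope_def_module, add_sub_cancel_left, smul_smul]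
    rw [show (z - c) / s * (s * (z - c)⁻¹) = 1 by field_simp]
    simp

namespace IsMinimalInspection

variable {a b : ℝ} {γ : ℝ → E3}

lemma eVariationOn_le_edist (h : IsMinimalInspection a b γ) {y : ℝ} (hy : y ∈ Icc a b)
    (hS : Inspects (insert (γ a) (γ '' Icc y b))) :
    eVariationOn γ (Icc a y) ≤ edist (γ a) (γ y) := by
  obtain ⟨⟨-, hγ, hclosed, hfin, -⟩, -⟩ := id h
  have hshort := (ArcThrough.segment (γ a) (γ y)).trans
    (ArcThrough.of_continuousOn hy.2 (hγ.mono (Icc_subset_Icc_left hy.1)))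
  rw [← hclosed, ← edist_dist] at hshort
  have hle := h.length_le_of_arcThrough (hS.mono (by grind)) hshort
  rw [← Icc_union_Icc_eq_Icc hy.1 hy.2,
    eVariationOn.union _ (isGreatest_Icc hy.1) (isLeast_Icc hy.2)] at hle
  have hfin' : eVariationOn γ (Icc y b) ≠ ⊤ :=
    ne_top_of_le_ne_top hfin (eVariationOn.mono _ (Icc_subset_Icc_left hy.1))
  exact (ENNReal.add_le_add_iff_right hfin').1 hle

lemma mapsTo_segment_of_forall_mem_coneToBall (h : IsMinimalInspection a b γ) {y : ℝ}
    (hy : y ∈ Icc a b) (hR : ∀ z ∈ Ioo a y, γ z ∈ coneToBall (γ a)) :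
    MapsTo γ (Icc a y) (segment ℝ (γ a) (γ y)) := by
  -- Whatever is visible from the cone is visible from `γ a`, so the curve before `y` can be
  -- replaced by a segment, and by minimality it was a segment already.
  have hvis : Inspects (insert (γ a) (γ '' Icc y b)) := by
    intro u hu
    obtain ⟨_, ⟨z, hz, rfl⟩, hzu⟩ := h.1.inspects u hu
    rcases eq_or_lt_of_le hz.1 with rfl | haz
    · exact ⟨_, mem_insert _ _, hzu⟩
    rcases lt_or_ge z y with hzy | hyz
    · exact ⟨_, mem_insert _ _, one_le_inner_of_mem_coneToBall (hR z ⟨haz, hzy⟩) hu hzu⟩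
    · exact ⟨_, mem_insert_of_mem _ ⟨z, ⟨hyz, hz.2⟩, rfl⟩, hzu⟩
  exact fun z hz ↦ mem_segment_of_eVariationOn_le_edist (h.eVariationOn_le_edist hy hvis) hz

lemma one_le_norm_left_add_smul (h : IsMinimalInspection a b γ)
    (hout : ∀ t ∈ Icc a b, 1 ≤ ‖γ t‖) {v : E3} (hv : HasDerivWithinAt γ v (Ioi a) a) {s : ℝ}
    (hs : 0 < s) : 1 ≤ ‖γ a + s • v‖ := by
  by_contra! hlt
  obtain ⟨⟨hab, hγ, hclosed, -⟩, -⟩ := id h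
  have hself := self_notMem_coneToBall (hout a (left_mem_Icc.2 hab.le))
  obtain ⟨y, hy, hyR, hR⟩ := exists_first_exit (isOpen_coneToBall _) hab hγ
    (eventually_mem_coneToBall_of_hasDerivWithinAt hv hs hlt) (hclosed ▸ hself)
  have hseg := h.mapsTo_segment_of_forall_mem_coneToBall (Ioc_subset_Icc_self hy) hR
  obtain ⟨z, hz⟩ := nonempty_Ioo.2 hy.1
  obtain ⟨x, hx, hzx⟩ := hR z hz
  rw [mem_ball_zero_iff] at hx
  have hzseg := hseg (Ioo_subset_Icc_self hz)
  have hza : γ z ≠ γ a := fun e ↦ hself (e ▸ hR z hz)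
  rcases wbtw_total_of_mem_openSegment hza hzseg hzx with hxy | hyx
  · obtain ⟨t, ht, rfl⟩ := segment_subset_image_of_mapsTo hy.1.le
      (hγ.mono (Icc_subset_Icc_right hy.2)) hseg hxy
    exact (hout t ⟨ht.1, ht.2.trans hy.2⟩).not_gt hx
  · refine hyR ⟨x, by simpa using hx, mem_openSegment_of_ne_left_right ?_ ?_ hyx⟩
    · intro e
      rw [← e, segment_same] at hzseg
      exact hza hzseg
    · rintro rfl
      exact (hout y (Ioc_subset_Icc_self hy)).not_gt hx

lemma one_le_norm_add_smul_of_pos (h : IsMinimalInspection a b γ)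
    (hout : ∀ t ∈ Icc a b, 1 ≤ ‖γ t‖) {t : ℝ} (ht : t ∈ Ioo a b) {v : E3} (hv : HasDerivAt γ v t)
    {s : ℝ} (hs : 0 < s) : 1 ≤ ‖γ t + s • v‖ := by
  have ht' := Ioo_subset_Icc_self ht
  have heq : EqOn (curveConcat γ γ b a) γ (Icc t b) := curveConcat_eqOn_left.mono fun _ h ↦ h.2
  have hderiv : HasDerivWithinAt (curveConcat γ γ b a) v (Ioi t) t :=
    (hv.hasDerivWithinAt.congr heq (heq (left_mem_Icc.2 ht'.2))).mono_of_mem_nhdsWithin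
      (Icc_mem_nhdsGT ht.2)
  rw [← heq (left_mem_Icc.2 ht'.2)]
  refine (h.rotate ht').one_le_norm_left_add_smul (fun z hz ↦ ?_) hderiv hs
  have himage := image_curveConcat h.1.2.2.1.symm ht'.2 ht'.1
  rcases himage.subset (mem_image_of_mem _ hz) with ⟨x, hx, e⟩ | ⟨x, hx, e⟩ <;> rw [← e]
  exacts [hout x ⟨ht'.1.trans hx.1, hx.2⟩, hout x ⟨hx.1, hx.2.trans ht'.2⟩]

lemma one_le_norm_add_smul (h : IsMinimalInspection a b γ) (hout : ∀ t ∈ Icc a b, 1 ≤ ‖γ t‖)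
    {t : ℝ} (ht : t ∈ Ioo a b) {v : E3} (hv : HasDerivAt γ v t) (s : ℝ) :
    1 ≤ ‖γ t + s • v‖ := by
  rcases lt_trichotomy s 0 with hs | rfl | hs
  · have hrev : HasDerivAt (γ ∘ fun z ↦ a + b - z) (-v) (a + b - t) :=
      HasDerivAt.comp_const_sub (a + b) (a + b - t) (by simpa using hv)
    simpa using h.reverse.one_le_norm_add_smul_of_pos
      (fun z hz ↦ hout _ ⟨by linarith [hz.2], by linarith [hz.1]⟩)
      ⟨by linarith [ht.2], by linarith [ht.1]⟩ hrev (neg_pos.2 hs)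
  · simpa using hout t (Ioo_subset_Icc_self ht)
  · exact h.one_le_norm_add_smul_of_pos hout ht hv hs

end IsMinimalInspection

lemma sq_inner_le_of_forall_one_le_norm_add_smul {E : Type*} [NormedAddCommGroup E]
    [InnerProductSpace ℝ E] {x v : E} (h : ∀ s : ℝ, 1 ≤ ‖x + s • v‖) :
    ⟪x, v⟫ ^ 2 ≤ ‖v‖ ^ 2 * (‖x‖ ^ 2 - 1) := by
  rcases eq_or_ne v 0 with rfl | hv
  · simp
  have : 0 < ‖v‖ ^ 2 := by positivity
  -- The minimum over `s` is attained at the foot of the perpendicular from the origin.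
  have hfoot := one_le_pow₀ (n := 2) (h (-(⟪x, v⟫ / ‖v‖ ^ 2)))
  rw [norm_add_sq_real, real_inner_smul_right, norm_smul, mul_pow, Real.norm_eq_abs, sq_abs]
    at hfoot
  have : ‖v‖ ^ 2 * (‖x‖ ^ 2 + 2 * (-(⟪x, v⟫ / ‖v‖ ^ 2) * ⟪x, v⟫)
      + (-(⟪x, v⟫ / ‖v‖ ^ 2)) ^ 2 * ‖v‖ ^ 2) = ‖v‖ ^ 2 * ‖x‖ ^ 2 - ⟪x, v⟫ ^ 2 := by
    field_simp
    ring
  nlinarith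

/-! ### The curve of four semicircles -/

section Semicircle

variable {E : Type*} [NormedAddCommGroup E] [InnerProductSpace ℝ E] {e f g u : E}

/-- The parametrization of the semicircle with centre `e`, diameter from `e + f` to `e - f` and
apex `e + g`. -/
def semicircle (e f g : E) (t : ℝ) : E := e + (cos t • f + sin t • g)

lemma semicircle_zero : semicircle e f g 0 = e + f := by simp [semicircle]

lemma semicircle_pi : semicircle e f g π = e - f := by simp [semicircle, sub_eq_add_neg]

lemma lipschitzWith_semicircle (hf : ‖f‖ = 1) (hg : ‖g‖ = 1) (hfg : ⟪f, g⟫ = 0) :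
    LipschitzWith 1 (semicircle e f g) := by
  refine LipschitzWith.of_dist_le_mul fun x y ↦ ?_
  rw [NNReal.coe_one, one_mul, dist_eq_norm, Real.dist_eq, ← abs_norm, ← sq_le_sq]
  have hcos := Real.one_sub_sq_div_two_le_cos (x := x - y)
  rw [Real.cos_sub] at hcos
  calc ‖semicircle e f g x - semicircle e f g y‖ ^ 2
      = ‖(cos x - cos y) • f + (sin x - sin y) • g‖ ^ 2 := by
        congr 2
        simp only [semicircle]
        module
    _ = (cos x - cos y) ^ 2 + (sin x - sin y) ^ 2 := by
        rw [norm_add_sq_real, real_inner_smul_left, real_inner_smul_right, hfg, norm_smul,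
          norm_smul, hf, hg, Real.norm_eq_abs, Real.norm_eq_abs, mul_pow, mul_pow, sq_abs, sq_abs]
        ring
    _ ≤ (x - y) ^ 2 := by nlinarith [sin_sq_add_cos_sq x, sin_sq_add_cos_sq y]

lemma arcThrough_semicircle (hf : ‖f‖ = 1) (hg : ‖g‖ = 1) (hfg : ⟪f, g⟫ = 0) :
    ArcThrough (semicircle e f g '' Icc 0 π) (e + f) (e - f) (ENNReal.ofReal π) := by
  simpa [semicircle_zero, semicircle_pi] using
    ArcThrough.of_lipschitzOnWith pi_pos.le (lipschitzWith_semicircle hf hg hfg).lipschitzOnWith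

lemma exists_mem_semicircle_one_le_inner (he : 0 ≤ ⟪e, u⟫) (hg : 0 ≤ ⟪g, u⟫)
    (hu : ⟪e, u⟫ ^ 2 + ⟪f, u⟫ ^ 2 + ⟪g, u⟫ ^ 2 = 1) :
    ∃ x ∈ semicircle e f g '' Icc 0 π, 1 ≤ ⟪x, u⟫ := by
  let z : ℂ := ⟨⟪f, u⟫, ⟪g, u⟫⟩
  have hre : ‖z‖ * cos z.arg = ⟪f, u⟫ := z.norm_mul_cos_arg
  have him : ‖z‖ * sin z.arg = ⟪g, u⟫ := z.norm_mul_sin_arg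
  refine ⟨_, ⟨z.arg, ⟨Complex.arg_nonneg_iff.2 hg, z.arg_le_pi⟩, rfl⟩, ?_⟩
  have hinner : ⟪semicircle e f g z.arg, u⟫ = ⟪e, u⟫ + ‖z‖ := by
    rw [semicircle, inner_add_left, inner_add_left, real_inner_smul_left, real_inner_smul_left,
      ← hre, ← him]
    linear_combination ‖z‖ * cos_sq_add_sin_sq z.arg
  have hsq : ⟪e, u⟫ ^ 2 + ‖z‖ ^ 2 = 1 := by
    rw [← hre, ← him] at hu
    linear_combination hu - ‖z‖ ^ 2 * cos_sq_add_sin_sq z.arg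
  rw [hinner]
  nlinarith [mul_nonneg he (norm_nonneg z), norm_nonneg z]

lemma exists_inspects_arcThrough_four_pi (b : OrthonormalBasis (Fin 3) ℝ E) :
    ∃ S : Set E, Inspects S ∧ ∃ p, ArcThrough S p p (ENNReal.ofReal (4 * π)) := by
  have A₁ := arcThrough_semicircle (e := b 0) (f := -b 1) (g := b 2) (by simp) (by simp) (by simp)
  have A₂ := arcThrough_semicircle (e := b 1) (f := b 0) (g := -b 2) (by simp) (by simp) (by simp)
  have A₃ := arcThrough_semicircle (e := -b 0) (f := b 1) (g := b 2) (by simp) (by simp) (by simp)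
  have A₄ := arcThrough_semicircle (e := -b 1) (f := -b 0) (g := -b 2)
    (by simp) (by simp) (by simp)
  rw [show b 1 + b 0 = b 0 - -b 1 by abel] at A₂
  rw [show -b 0 + b 1 = b 1 - b 0 by abel] at A₃
  rw [show -b 1 + -b 0 = -b 0 - b 1 by abel, show -b 1 - -b 0 = b 0 + -b 1 by abel] at A₄
  refine ⟨_, fun u hu ↦ ?_, _, (((A₁.trans A₂).trans A₃).trans A₄).mono subset_rfl ?_⟩
  · have hsum : ⟪b 0, u⟫ ^ 2 + ⟪b 1, u⟫ ^ 2 + ⟪b 2, u⟫ ^ 2 = 1 := by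
      simpa [Fin.sum_univ_three, hu] using b.sum_sq_inner_right u
    have hneg (i : Fin 3) (hi : ⟪b i, u⟫ ≤ 0) : 0 ≤ ⟪-b i, u⟫ := by
      rw [inner_neg_left]
      linarith
    have hsq (i : Fin 3) : ⟪-b i, u⟫ ^ 2 = ⟪b i, u⟫ ^ 2 := by rw [inner_neg_left, neg_sq]
    rcases le_total 0 ⟪b 2, u⟫ with h₂ | h₂
    · rcases le_total 0 ⟪b 0, u⟫ with h₀ | h₀
      · exact (exists_mem_semicircle_one_le_inner h₀ h₂ (by rw [hsq, hsum])).imp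
          fun x hx ↦ ⟨.inl (.inl (.inl hx.1)), hx.2⟩
      · exact (exists_mem_semicircle_one_le_inner (hneg 0 h₀) h₂ (by rw [hsq, hsum])).imp
          fun x hx ↦ ⟨.inl (.inr hx.1), hx.2⟩
    · rcases le_total 0 ⟪b 1, u⟫ with h₁ | h₁
      · exact (exists_mem_semicircle_one_le_inner h₁ (hneg 2 h₂)
          (by rw [hsq, ← hsum]; ring)).imp fun x hx ↦ ⟨.inl (.inl (.inr hx.1)), hx.2⟩
      · exact (exists_mem_semicircle_one_le_inner (hneg 1 h₁) (hneg 2 h₂)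
          (by rw [hsq, hsq, hsq, ← hsum]; ring)).imp fun x hx ↦ ⟨.inr hx.1, hx.2⟩
  · rw [← ENNReal.ofReal_add, ← ENNReal.ofReal_add, ← ENNReal.ofReal_add] <;> try positivity
    exact ENNReal.ofReal_le_ofReal (by linarith)

end Semicircle

lemma IsMinimalInspection.length_le_four_pi {a b : ℝ} {γ : ℝ → E3}
    (h : IsMinimalInspection a b γ) : eVariationOn γ (Icc a b) ≤ ENNReal.ofReal (4 * π) := by
  obtain ⟨S, hS, p, hp⟩ := exists_inspects_arcThrough_four_pi (EuclideanSpace.basisFun (Fin 3) ℝ)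
  exact h.length_le_of_arcThrough hS hp

/-! ### Cap cones and their imbalance -/

section CapImbalance

variable {E : Type*} [NormedAddCommGroup E] [InnerProductSpace ℝ E] {x v w : E}

/-- The part of the open unit ball over the spherical cap of points `u` visible from `x`, i.e.
satisfying `1 ≤ ⟪x, u⟫`; measuring it by volume measures the cap by area. -/
def capCone (x : E) : Set E := {w | ‖w‖ < 1 ∧ ‖w‖ ≤ ⟪x, w⟫}

lemma capCone_subset_ball (x : E) : capCone x ⊆ Metric.ball 0 1 := fun w hw ↦ by simpa using hw.1

lemma notMem_capCone (hx : ‖x‖ < 1) (hw : w ≠ 0) : w ∉ capCone x := fun h ↦ by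
  nlinarith [h.2, real_inner_le_norm x w, norm_pos_iff.2 hw]

lemma mem_capCone_of_one_le_inner_normalize (hw : w ≠ 0) (hw1 : ‖w‖ < 1)
    (h : 1 ≤ ⟪x, NormedSpace.normalize w⟫) : w ∈ capCone x := by
  refine ⟨hw1, ?_⟩
  rw [NormedSpace.normalize, real_inner_smul_right, inv_mul_eq_div,
    one_le_div₀ (norm_pos_iff.2 hw)] at h
  exact h

variable [MeasurableSpace E] [BorelSpace E]

lemma measurableSet_capCone (x : E) : MeasurableSet (capCone x) := by
  have h₁ : IsOpen {w : E | ‖w‖ < 1} := isOpen_lt (by fun_prop) (by fun_prop)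
  have h₂ : IsClosed {w : E | ‖w‖ ≤ ⟪x, w⟫} := isClosed_le (by fun_prop) (by fun_prop)
  exact h₁.measurableSet.inter h₂.measurableSet

lemma measurable_sign_inner (v : E) : Measurable fun w ↦ Real.sign ⟪v, w⟫ := by
  unfold Real.sign
  exact .ite (isOpen_lt (by fun_prop) (by fun_prop)).measurableSet measurable_const
    (.ite (isOpen_lt (by fun_prop) (by fun_prop)).measurableSet measurable_const measurable_const)

/-- The wedge of directions in front of the hyperplane orthogonal to `v` and behind the one
orthogonal to `v'`. -/
def wedge (v v' : E) : Set E := {w | 0 ≤ ⟪v, w⟫ ∧ ⟪v', w⟫ ≤ 0}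

lemma measurableSet_wedge (v v' : E) : MeasurableSet (wedge v v') := by
  have h₁ : IsClosed {w : E | 0 ≤ ⟪v, w⟫} := isClosed_le (by fun_prop) (by fun_prop)
  have h₂ : IsClosed {w : E | ⟪v', w⟫ ≤ 0} := isClosed_le (by fun_prop) (by fun_prop)
  exact (h₁.inter h₂).measurableSet

variable [FiniteDimensional ℝ E]

/-- The volume of the part of `capCone x` in front of the hyperplane orthogonal to `v`, minus the
volume of the part behind it. It serves as a potential: it increases when `x` moves in the
direction `v`, at the rate at which the cap of `x` sweeps over the sphere. -/
def capImbalance (x v : E) : ℝ := ∫ w in capCone x, Real.sign ⟪v, w⟫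

lemma volume_capCone_ne_top (x : E) : volume (capCone x) ≠ ∞ :=
  ((measure_mono (capCone_subset_ball x)).trans_lt measure_ball_lt_top).ne

lemma integrableOn_sign_inner_capCone (x v : E) :
    IntegrableOn (fun w ↦ Real.sign ⟪v, w⟫) (capCone x) :=
  .of_bound (volume_capCone_ne_top x).lt_top (measurable_sign_inner v).aestronglyMeasurable 1 <|
    .of_forall fun w ↦ by rcases Real.sign_apply_eq ⟪v, w⟫ with h | h | h <;> simp [h]

lemma integrable_indicator_capCone (x : E) :
    Integrable ((capCone x).indicator (1 : E → ℝ)) :=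
  (integrable_indicator_iff (measurableSet_capCone x)).2 <|
    integrableOn_const (volume_capCone_ne_top x)

lemma capImbalance_add_sub (x v : E) : capImbalance (x + v) v - capImbalance x v =
    ∫ w, |(capCone (x + v)).indicator 1 w - (capCone x).indicator (1 : E → ℝ) w| := by
  rw [capImbalance, capImbalance, ← integral_indicator (measurableSet_capCone _),
    ← integral_indicator (measurableSet_capCone _), ← integral_sub
      ((integrableOn_sign_inner_capCone _ _).integrable_indicator (measurableSet_capCone _))
      ((integrableOn_sign_inner_capCone _ _).integrable_indicator (measurableSet_capCone _))]
  congr with w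
  have hmem : w ∈ capCone (x + v) ↔ ‖w‖ < 1 ∧ ‖w‖ ≤ ⟪x, w⟫ + ⟪v, w⟫ := by
    rw [← inner_add_left]
    rfl
  -- Points in front of the hyperplane can only enter the cone, those behind it can only leave it.
  rcases lt_trichotomy ⟪v, w⟫ 0 with h | h | h
  · have hsub : w ∈ capCone (x + v) → w ∈ capCone x := fun hw ↦
      ⟨(hmem.1 hw).1, by linarith [(hmem.1 hw).2]⟩
    by_cases h₁ : w ∈ capCone (x + v) <;> by_cases h₂ : w ∈ capCone x <;>
      simp_all [Real.sign_of_neg h]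
  · have hiff : w ∈ capCone (x + v) ↔ w ∈ capCone x := by rw [hmem, h, add_zero]; rfl
    by_cases h₂ : w ∈ capCone x <;> simp [hiff, h₂]
  · have hsub : w ∈ capCone x → w ∈ capCone (x + v) := fun hw ↦
      hmem.2 ⟨hw.1, by linarith [hw.2]⟩
    by_cases h₁ : w ∈ capCone (x + v) <;> by_cases h₂ : w ∈ capCone x <;>
      simp_all [Real.sign_of_pos h]

lemma capImbalance_eq_zero (hx : ‖x‖ < 1) (v : E) : capImbalance x v = 0 := by
  refine setIntegral_eq_zero_of_forall_eq_zero fun w hw ↦ ?_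
  obtain rfl : w = 0 := by_contra fun h ↦ notMem_capCone hx h hw
  simp

lemma capImbalance_map (Φ : E ≃ₗᵢ[ℝ] E) (x v : E) :
    capImbalance (Φ x) (Φ v) = capImbalance x v := by
  rw [capImbalance, ← Φ.measurePreserving.setIntegral_preimage_emb
    Φ.toHomeomorph.measurableEmbedding]
  simp [capImbalance, capCone]

lemma capImbalance_smul (x v : E) {c : ℝ} (hc : 0 < c) :
    capImbalance x (c • v) = capImbalance x v := by
  have hsign (w : E) : Real.sign ⟪c • v, w⟫ = Real.sign ⟪v, w⟫ := by
    rw [real_inner_smul_left]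
    rcases lt_trichotomy ⟪v, w⟫ 0 with h | h | h
    · rw [Real.sign_of_neg h, Real.sign_of_neg (mul_neg_of_pos_of_neg hc h)]
    · rw [h, mul_zero]
    · rw [Real.sign_of_pos h, Real.sign_of_pos (mul_pos hc h)]
  simp only [capImbalance, hsign]

lemma capImbalance_sub_le (x v v' : E) : capImbalance x v - capImbalance x v' ≤
    2 * volume.real (capCone x ∩ wedge v v') := by
  have hle (w : E) : Real.sign ⟪v, w⟫ - Real.sign ⟪v', w⟫ ≤
      (wedge v v').indicator (fun _ ↦ 2) w := by
    by_cases hw : w ∈ wedge v v'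
    · rw [indicator_of_mem hw]
      rcases Real.sign_apply_eq ⟪v, w⟫ with h | h | h <;>
        rcases Real.sign_apply_eq ⟪v', w⟫ with h' | h' | h' <;> norm_num [h, h']
    · rw [indicator_of_notMem hw]
      rcases lt_or_ge ⟪v, w⟫ 0 with h | h
      · rw [Real.sign_of_neg h]
        rcases Real.sign_apply_eq ⟪v', w⟫ with h' | h' | h' <;> norm_num [h']
      · rw [Real.sign_of_pos (not_le.1 fun h' ↦ hw ⟨h, h'⟩)]
        rcases Real.sign_apply_eq ⟪v, w⟫ with h' | h' | h' <;> norm_num [h']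
  calc capImbalance x v - capImbalance x v'
      = ∫ w in capCone x, (Real.sign ⟪v, w⟫ - Real.sign ⟪v', w⟫) := (integral_sub
        (integrableOn_sign_inner_capCone x v) (integrableOn_sign_inner_capCone x v')).symm
    _ ≤ ∫ w in capCone x, (wedge v v').indicator (fun _ ↦ 2) w := integral_mono
        ((integrableOn_sign_inner_capCone x v).sub (integrableOn_sign_inner_capCone x v'))
        ((integrableOn_const (volume_capCone_ne_top x)).indicator (measurableSet_wedge v v')) hle
    _ = 2 * volume.real (capCone x ∩ wedge v v') := by
        rw [setIntegral_indicator (measurableSet_wedge v v'), setIntegral_const, smul_eq_mul,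
          mul_comm]

end CapImbalance

/-! ### Wedges of cap cones -/

lemma measurePreserving_coordProd :
    MeasurePreserving fun w : E3 ↦ ((w 0, w 1), w 2) :=
  (Measure.measurePreserving_swap (μ := (volume : Measure ℝ))
    (ν := (volume : Measure (ℝ × ℝ)))).comp <|
  ((MeasurePreserving.id volume).prod (volume_preserving_finTwoArrow ℝ)).comp <|
  (volume_preserving_piFinSuccAbove (fun _ ↦ ℝ) 2).comp <|
  EuclideanSpace.volume_preserving_symm_measurableEquiv_toLp (Fin 3)

lemma lintegral_cylindrical {f : E3 → ℝ≥0∞} (hf : Measurable f) : ∫⁻ w, f w =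
    ∫⁻ t in Ioo (-π) π, ∫⁻ p in Ioi 0 ×ˢ univ,
      ENNReal.ofReal p.1 * f !₂[p.1 * cos t, p.1 * sin t, p.2] := by
  have hg : Measurable fun P : (ℝ × ℝ) × ℝ ↦ f !₂[P.1.1, P.1.2, P.2] := by fun_prop
  calc ∫⁻ w, f w
      = ∫⁻ P : (ℝ × ℝ) × ℝ, f !₂[P.1.1, P.1.2, P.2] := by
        rw [← measurePreserving_coordProd.lintegral_comp hg]
        congr with w
        congr with i
        fin_cases i <;> rfl
    _ = ∫⁻ q : ℝ × ℝ, ∫⁻ z, f !₂[q.1, q.2, z] := by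
        rw [Measure.volume_eq_prod, lintegral_prod _ hg.aemeasurable]
    _ = ∫⁻ q in Ioi 0 ×ˢ Ioo (-π) π,
          ENNReal.ofReal q.1 * ∫⁻ z, f !₂[q.1 * cos q.2, q.1 * sin q.2, z] := by
        rw [← lintegral_comp_polarCoord_symm]
        rfl
    _ = ∫⁻ t in Ioo (-π) π, ∫⁻ ρ in Ioi 0,
          ENNReal.ofReal ρ * ∫⁻ z, f !₂[ρ * cos t, ρ * sin t, z] := by
        have h : Measurable fun Q : (ℝ × ℝ) × ℝ ↦
            f !₂[Q.1.1 * cos Q.1.2, Q.1.1 * sin Q.1.2, Q.2] := by fun_prop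
        have h' : Measurable fun q : ℝ × ℝ ↦
            ENNReal.ofReal q.1 * ∫⁻ z, f !₂[q.1 * cos q.2, q.1 * sin q.2, z] :=
          (by fun_prop : Measurable fun q : ℝ × ℝ ↦ ENNReal.ofReal q.1).mul h.lintegral_prod_right'
        rw [Measure.volume_eq_prod, ← Measure.prod_restrict, lintegral_prod_symm _ h'.aemeasurable]
    _ = _ := by
        refine lintegral_congr fun t ↦ ?_
        rw [Measure.volume_eq_prod, ← Measure.prod_restrict, Measure.restrict_univ,
          lintegral_prod _ (by fun_prop)]
        refine lintegral_congr fun ρ ↦ (lintegral_const_mul _ (by fun_prop)).symm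

/-- The length of the chord of the unit circle which is seen from a point at distance `p` from the
centre, that is, the chord joining the two points of tangency; it is zero for `p ≤ 1`. -/
def sweepRate (p : ℝ) : ℝ := 2 * √(1 - (max p 1)⁻¹ ^ 2)

lemma setLIntegral_mul_cos_Ioc_prod_Icc {φ : ℝ} (hφ : φ ∈ Icc 0 (π / 2)) :
    ∫⁻ q in Ioc (0 : ℝ) 1 ×ˢ Icc (-φ) φ, ENNReal.ofReal (q.1 ^ 2 * cos q.2) =
      ENNReal.ofReal (2 / 3 * sin φ) := by
  rw [← ofReal_integral_eq_lintegral_ofReal]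
  · congr 1
    rw [Measure.volume_eq_prod, setIntegral_prod_mul (fun s : ℝ ↦ s ^ 2) cos,
      integral_Icc_eq_integral_Ioc, ← intervalIntegral.integral_of_le zero_le_one,
      ← intervalIntegral.integral_of_le (by linarith [hφ.1]), integral_pow, integral_cos, sin_neg]
    ring
  · have hcont : Continuous fun q : ℝ × ℝ ↦ q.1 ^ 2 * cos q.2 := by fun_prop
    exact (hcont.continuousOn.integrableOn_compact (isCompact_Icc.prod isCompact_Icc)).mono_set
      (prod_mono_left Ioc_subset_Icc_self)
  · refine (ae_restrict_iff' (measurableSet_Ioc.prod measurableSet_Icc)).2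
      (.of_forall fun q hq ↦ ?_)
    exact mul_nonneg (sq_nonneg _) (cos_nonneg_of_mem_Icc
      ⟨by linarith [hq.2.1, hφ.2], hq.2.2.trans hφ.2⟩)

lemma mem_Icc_arccos_of_one_le_mul_cos {q t : ℝ} (ht : t ∈ Ioo (-π) π) (hq : 0 ≤ q)
    (h : 1 ≤ q * cos t) : t ∈ Icc (-arccos (max q 1)⁻¹) (arccos (max q 1)⁻¹) := by
  have hq1 : 1 ≤ q := by nlinarith [cos_le_one t]
  have hcos : q⁻¹ ≤ cos |t| := by rwa [cos_abs, inv_le_iff_one_le_mul₀' (by linarith)]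
  rw [max_eq_left hq1]
  refine abs_le.1 ?_
  calc |t| = arccos (cos |t|) := (arccos_cos (abs_nonneg t) (abs_lt.2 ht).le).symm
    _ ≤ arccos q⁻¹ := arccos_le_arccos hcos

/-- The planar cap cone of a point of the first axis at distance `q` from the origin: a slice of
`capCone x` by a half-plane bounded by an axis orthogonal to `x`. -/
def capSlice (q : ℝ) : Set (ℝ × ℝ) :=
  {p | p.1 ^ 2 + p.2 ^ 2 < 1 ∧ √(p.1 ^ 2 + p.2 ^ 2) ≤ q * p.1}

lemma lintegral_capSlice_le {q : ℝ} (hq : 0 ≤ q) :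
    ∫⁻ p in Ioi 0 ×ˢ univ, ENNReal.ofReal p.1 * (capSlice q).indicator 1 p ≤
      ENNReal.ofReal (1 / 3 * sweepRate q) := by
  set φ := arccos (max q 1)⁻¹
  have hφ : φ ∈ Icc 0 (π / 2) := ⟨arccos_nonneg _, arccos_le_pi_div_two.2 (by positivity)⟩
  have hmem {s t : ℝ} (hs : 0 < s) (ht : t ∈ Ioo (-π) π) (h : (s * cos t, s * sin t) ∈ capSlice q) :
      (s, t) ∈ Ioc (0 : ℝ) 1 ×ˢ Icc (-φ) φ := by
    have hsq : (s * cos t) ^ 2 + (s * sin t) ^ 2 = s ^ 2 := by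
      linear_combination s ^ 2 * cos_sq_add_sin_sq t
    obtain ⟨h₁, h₂⟩ := h
    simp only [hsq, sqrt_sq hs.le] at h₁ h₂
    exact ⟨⟨hs, by nlinarith⟩, mem_Icc_arccos_of_one_le_mul_cos ht hq (by nlinarith)⟩
  rw [← lintegral_indicator (measurableSet_Ioi.prod .univ), ← lintegral_comp_polarCoord_symm]
  calc _ ≤ ∫⁻ r in polarCoord.target, (Ioc 0 1 ×ˢ Icc (-φ) φ).indicator
          (fun r : ℝ × ℝ ↦ ENNReal.ofReal (r.1 ^ 2 * cos r.2)) r := by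
        refine setLIntegral_mono' polarCoord.open_target.measurableSet fun r hr ↦ ?_
        rw [polarCoord_symm_apply, indicator_apply]
        split_ifs with hpos
        swap; · simp
        by_cases hrS : (r.1 * cos r.2, r.1 * sin r.2) ∈ capSlice q
        · rw [indicator_of_mem hrS, indicator_of_mem (hmem hr.1 hr.2 hrS), Pi.one_apply, mul_one,
            smul_eq_mul, ← ENNReal.ofReal_mul (le_of_lt hr.1), sq, mul_assoc]
        · simp [indicator_of_notMem hrS]
    _ ≤ ∫⁻ r in Ioc (0 : ℝ) 1 ×ˢ Icc (-φ) φ, ENNReal.ofReal (r.1 ^ 2 * cos r.2) := by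
        rw [← lintegral_indicator (measurableSet_Ioc.prod measurableSet_Icc)]
        exact setLIntegral_le_lintegral _ _
    _ = ENNReal.ofReal (1 / 3 * sweepRate q) := by
        rw [setLIntegral_mul_cos_Ioc_prod_Icc hφ, sin_arccos, sweepRate]
        ring_nf

lemma capSlice_of_mem_capCone_of_mem_wedge {r θ θ' t : ℝ} {p : ℝ × ℝ} (hr : 0 ≤ r)
    (hθ : θ ≤ π) (hθ' : 0 ≤ θ') (ht : t ∈ Ioo (-π) π) (hp : 0 < p.1)
    (hcap : !₂[p.1 * cos t, p.1 * sin t, p.2] ∈ capCone !₂[0, r, 0])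
    (hwedge : !₂[p.1 * cos t, p.1 * sin t, p.2] ∈
      wedge !₂[-sin θ, cos θ, 0] !₂[-sin θ', cos θ', 0]) :
    (0 ≤ sin t ∧ t ∈ Icc θ θ') ∧ p ∈ capSlice (r * sin t) := by
  have hinner (α : ℝ) :
      ⟪!₂[-sin α, cos α, 0], !₂[p.1 * cos t, p.1 * sin t, p.2]⟫ = p.1 * sin (t - α) := by
    simp [PiLp.inner_apply, Fin.sum_univ_three, sin_sub]
    ring
  have hnorm : ‖!₂[p.1 * cos t, p.1 * sin t, p.2]‖ = √(p.1 ^ 2 + p.2 ^ 2) := by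
    rw [EuclideanSpace.norm_eq]
    congr 1
    simp [Fin.sum_univ_three]
    linear_combination p.1 ^ 2 * cos_sq_add_sin_sq t
  obtain ⟨h₀, h₁⟩ := hwedge
  rw [hinner] at h₀ h₁
  obtain ⟨hlt, hle⟩ := hcap
  simp only [hnorm, PiLp.inner_apply, Fin.sum_univ_three] at hlt hle
  have hvis : √(p.1 ^ 2 + p.2 ^ 2) ≤ r * sin t * p.1 := by
    simpa [mul_comm, mul_assoc, mul_left_comm] using hle
  have hsin : 0 < sin t := by
    have : 0 < √(p.1 ^ 2 + p.2 ^ 2) := by positivity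
    by_contra! hneg
    nlinarith [mul_nonneg hr hp.le]
  have ht0 : 0 < t := by
    by_contra! hneg
    exact hsin.not_ge (sin_nonpos_of_nonpos_of_neg_pi_le hneg ht.1.le)
  refine ⟨⟨hsin.le, ?_, ?_⟩, ?_, hvis⟩
  · by_contra! hlt'
    nlinarith [sin_neg_of_neg_of_neg_pi_lt (sub_neg.2 hlt') (by linarith)]
  · by_contra! hlt'
    nlinarith [sin_pos_of_pos_of_lt_pi (sub_pos.2 hlt') (by linarith [ht.2])]
  · nlinarith [sq_sqrt (by positivity : 0 ≤ p.1 ^ 2 + p.2 ^ 2), sqrt_nonneg (p.1 ^ 2 + p.2 ^ 2)]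

lemma volume_capCone_inter_wedge_le {r θ θ' : ℝ} (hr : 0 ≤ r) (hθ : θ ≤ π) (hθ' : 0 ≤ θ') :
    volume (capCone !₂[0, r, 0] ∩ wedge !₂[-sin θ, cos θ, 0] !₂[-sin θ', cos θ', 0]) ≤
      ∫⁻ t in Icc θ θ', ENNReal.ofReal (1 / 3 * sweepRate (r * sin t)) := by
  set W := capCone !₂[0, r, 0] ∩ wedge !₂[-sin θ, cos θ, 0] !₂[-sin θ', cos θ', 0]
  have hW : MeasurableSet W := (measurableSet_capCone _).inter (measurableSet_wedge _ _)
  rw [← lintegral_indicator_one hW, lintegral_cylindrical (measurable_one.indicator hW)]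
  calc _ ≤ ∫⁻ t in Ioo (-π) π, (Icc θ θ').indicator
          (fun t ↦ ENNReal.ofReal (1 / 3 * sweepRate (r * sin t))) t := by
        refine setLIntegral_mono' measurableSet_Ioo fun t ht ↦ ?_
        have hslice {p : ℝ × ℝ} (hp : 0 < p.1) (h : !₂[p.1 * cos t, p.1 * sin t, p.2] ∈ W) :=
          capSlice_of_mem_capCone_of_mem_wedge hr hθ hθ' ht hp h.1 h.2
        by_cases hin : 0 ≤ sin t ∧ t ∈ Icc θ θ'
        · rw [indicator_of_mem hin.2]
          refine le_trans ?_ (lintegral_capSlice_le (mul_nonneg hr hin.1))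
          refine setLIntegral_mono' (measurableSet_Ioi.prod .univ) fun p hp ↦ ?_
          gcongr
          by_cases hmem : !₂[p.1 * cos t, p.1 * sin t, p.2] ∈ W
          · simp [indicator_of_mem hmem, indicator_of_mem (hslice hp.1 hmem).2]
          · simp [indicator_of_notMem hmem]
        · rw [setLIntegral_congr_fun (measurableSet_Ioi.prod .univ) fun p hp ↦ by
            rw [indicator_of_notMem fun h ↦ hin (hslice hp.1 h).1, mul_zero]]
          simp
    _ ≤ ∫⁻ t in Icc θ θ', ENNReal.ofReal (1 / 3 * sweepRate (r * sin t)) := by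
        rw [← lintegral_indicator measurableSet_Icc]
        exact setLIntegral_le_lintegral _ _

lemma exists_unit_inner_eq_zero_smul_eq {E : Type*} [NormedAddCommGroup E] [InnerProductSpace ℝ E]
    [FiniteDimensional ℝ E] (hE : 1 < Module.finrank ℝ E) {e g : E} (hg : ⟪e, g⟫ = 0) :
    ∃ f : E, ‖f‖ = 1 ∧ ⟪e, f⟫ = 0 ∧ g = ‖g‖ • f := by
  rcases eq_or_ne g 0 with rfl | hg0
  · have hpos : 0 < Module.finrank ℝ (ℝ ∙ e)ᗮ := by
      have := Submodule.finrank_add_finrank_orthogonal (ℝ ∙ e)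
      have := finrank_span_le_card (R := ℝ) ({e} : Set E)
      simp only [Set.toFinset_card, Fintype.card_unique] at this
      omega
    have := Module.nontrivial_of_finrank_pos hpos
    obtain ⟨⟨f, hf⟩, hfn⟩ := exists_norm_eq (ℝ ∙ e)ᗮ zero_le_one
    exact ⟨f, hfn, Submodule.mem_orthogonal_singleton_iff_inner_right.1 hf, by simp⟩
  · exact ⟨NormedSpace.normalize g, NormedSpace.norm_normalize hg0,
      by rw [NormedSpace.normalize, inner_smul_right, hg, mul_zero],
      (NormedSpace.norm_smul_normalize g).symm⟩

lemma exists_unit_inner_eq_zero_eq_cos_sin_angle {E : Type*} [NormedAddCommGroup E]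
    [InnerProductSpace ℝ E] [FiniteDimensional ℝ E] (hE : 1 < Module.finrank ℝ E) {e : E}
    (he : ‖e‖ = 1) (v : E) :
    ∃ f : E, ‖f‖ = 1 ∧ ⟪e, f⟫ = 0 ∧ v = ‖v‖ • (cos (angle e v) • e + sin (angle e v) • f) := by
  have hev : ⟪e, v⟫ = ‖v‖ * cos (angle e v) := by
    rw [← cos_angle_mul_norm_mul_norm, he]
    ring
  set g := v - (‖v‖ * cos (angle e v)) • e with hg
  have heg : ⟪e, g⟫ = 0 := by
    rw [hg, inner_sub_right, inner_smul_right, real_inner_self_eq_norm_sq, he, hev]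
    ring
  have hgn : ‖g‖ = ‖v‖ * sin (angle e v) := by
    refine (sq_eq_sq₀ (norm_nonneg _) (mul_nonneg (norm_nonneg _) (sin_angle_nonneg _ _))).1 ?_
    rw [hg, norm_sub_sq_real, inner_smul_right, real_inner_comm, hev, norm_smul, he,
      Real.norm_eq_abs, mul_one, sq_abs]
    linear_combination -‖v‖ ^ 2 * cos_sq_add_sin_sq (angle e v)
  obtain ⟨f, hf, hef, hgf⟩ := exists_unit_inner_eq_zero_smul_eq hE heg
  refine ⟨f, hf, hef, ?_⟩
  rw [smul_add, smul_smul, smul_smul, ← hgn, ← hgf, hg]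
  abel

lemma exists_linearIsometryEquiv_eq_cos_sin_angle {x : E3} (hx : x ≠ 0) (v : E3) :
    ∃ Φ : E3 ≃ₗᵢ[ℝ] E3, Φ x = !₂[0, ‖x‖, 0] ∧
      Φ v = ‖v‖ • !₂[-sin (angle x v), cos (angle x v), 0] := by
  have hxe : x = ‖x‖ • NormedSpace.normalize x := (NormedSpace.norm_smul_normalize x).symm
  have he : ‖NormedSpace.normalize x‖ = 1 := NormedSpace.norm_normalize hx
  obtain ⟨f, hf, hef, hv⟩ := exists_unit_inner_eq_zero_eq_cos_sin_angle
    (by rw [finrank_euclideanSpace_fin]; norm_num) he v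
  rw [angle_normalize_left] at hv
  set e := NormedSpace.normalize x
  have hon : Orthonormal ℝ (({0, 1} : Set (Fin 3)).domRestrict ![-f, e, 0]) := by
    constructor
    · rintro ⟨i, (rfl | rfl)⟩
      · exact (norm_neg f).trans hf
      · exact he
    · rintro ⟨i, (rfl | rfl)⟩ ⟨j, (rfl | rfl)⟩ hij
      · simp at hij
      · exact (inner_neg_left f e).trans (by rw [real_inner_comm, hef, neg_zero])
      · exact (inner_neg_right e f).trans (by rw [hef, neg_zero])
      · simp at hij
  obtain ⟨b, hb⟩ := hon.exists_orthonormalBasis_extension_of_card_eq (by simp)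
  have hb0 : f = -b 0 := by rw [hb 0 (by simp)]; simp
  have hb1 : e = b 1 := by rw [hb 1 (by simp)]; simp
  refine ⟨b.repr, ?_, ?_⟩
  · conv_lhs => rw [hxe, hb1]
    ext i
    fin_cases i <;> simp
  · conv_lhs => rw [hv, hb1, hb0]
    ext i
    fin_cases i <;> simp

lemma capImbalance_eq_of_angle {x v : E3} (hx : x ≠ 0) (hv : v ≠ 0) : capImbalance x v =
    capImbalance !₂[0, ‖x‖, 0] !₂[-sin (angle x v), cos (angle x v), 0] := by
  obtain ⟨Φ, hΦx, hΦv⟩ := exists_linearIsometryEquiv_eq_cos_sin_angle hx v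
  rw [← capImbalance_map Φ, hΦx, hΦv, capImbalance_smul _ _ (norm_pos_iff.2 hv)]

lemma continuous_sweepRate : Continuous sweepRate := by
  have h (p : ℝ) : max p 1 ≠ 0 := by positivity
  unfold sweepRate
  fun_prop (disch := assumption)

lemma sweepRate_nonneg (p : ℝ) : 0 ≤ sweepRate p := by
  unfold sweepRate
  positivity

lemma capImbalance_sub_le_integral_sweepRate {x v v' : E3} (hx : x ≠ 0) (hv : v ≠ 0)
    (hv' : v' ≠ 0) (hle : angle x v ≤ angle x v') : capImbalance x v - capImbalance x v' ≤
      2 / 3 * ∫ t in angle x v..angle x v', sweepRate (‖x‖ * sin t) := by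
  have hcont : Continuous fun t ↦ 1 / 3 * sweepRate (‖x‖ * sin t) := by
    have := continuous_sweepRate
    fun_prop
  have hnonneg (t : ℝ) : 0 ≤ 1 / 3 * sweepRate (‖x‖ * sin t) :=
    mul_nonneg (by norm_num) (sweepRate_nonneg _)
  rw [capImbalance_eq_of_angle hx hv, capImbalance_eq_of_angle hx hv']
  refine (capImbalance_sub_le _ _ _).trans ?_
  calc _ ≤ 2 * ∫ t in angle x v..angle x v', 1 / 3 * sweepRate (‖x‖ * sin t) := by
        gcongr
        rw [intervalIntegral.integral_of_le hle, ← integral_Icc_eq_integral_Ioc]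
        refine ENNReal.toReal_le_of_le_ofReal (integral_nonneg hnonneg) ?_
        rw [ofReal_integral_eq_lintegral_ofReal hcont.integrableOn_Icc (.of_forall hnonneg)]
        exact volume_capCone_inter_wedge_le (norm_nonneg x) (angle_le_pi x v) (angle_nonneg x v')
    _ = 2 / 3 * ∫ t in angle x v..angle x v', sweepRate (‖x‖ * sin t) := by
        rw [intervalIntegral.integral_const_mul]
        ring

/-! ### Critical polygons -/

lemma two_mul_abs_sub_le_sum_of_eq {n k : ℕ} (f : ℕ → ℝ) (hk : k ≤ n) (h : f n = f 0) :
    2 * |f k - f 0| ≤ ∑ i ∈ Finset.range n, |f (i + 1) - f i| := by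
  have h₁ := dist_le_Ico_sum_dist f (Nat.zero_le k)
  have h₂ := dist_le_Ico_sum_dist f hk
  rw [Finset.range_eq_Ico, ← Finset.sum_Ico_consecutive _ (Nat.zero_le k) hk]
  simp only [h, Real.dist_eq, abs_sub_comm (f _) (f (_ + 1)), abs_sub_comm (f 0) (f k)] at h₁ h₂
  linarith

section Polygon

variable {E : Type*} [NormedAddCommGroup E] {q : ℕ → E} {n i : ℕ}

/-- The `i`-th edge of the polygon with vertices `q 0, q 1, …`, as a vector. -/
def edge (q : ℕ → E) (i : ℕ) : E := q (i + 1) - q i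

/-- The length of the polygon `q 0, …, q n`. -/
def polyLength (q : ℕ → E) (n : ℕ) : ℝ := ∑ i ∈ Finset.range n, ‖edge q i‖

lemma add_edge (q : ℕ → E) (i : ℕ) : q i + edge q i = q (i + 1) := add_sub_cancel _ _

variable [InnerProductSpace ℝ E]

/-- The angle between the position vector and the `i`-th edge at the first endpoint of the edge. -/
def startAngle (q : ℕ → E) (i : ℕ) : ℝ := angle (q i) (edge q i)

/-- The angle between the position vector and the `i`-th edge at the last endpoint of the edge. -/
def endAngle (q : ℕ → E) (i : ℕ) : ℝ := angle (q (i + 1)) (edge q i)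

/-- The distance from the origin to the line containing the `i`-th edge. -/
def lineDist (q : ℕ → E) (i : ℕ) : ℝ := ‖q i‖ * sin (startAngle q i)

lemma norm_mul_cos_angle (x v : E) : ‖x‖ * cos (angle x v) = ⟪x, NormedSpace.normalize v⟫ := by
  rcases eq_or_ne v 0 with rfl | hv
  · simp
  · rw [← angle_normalize_right, ← cos_angle_mul_norm_mul_norm, NormedSpace.norm_normalize hv]
    ring

lemma norm_eq_inner_normalize_sub (q : ℕ → E) (i : ℕ) : ‖edge q i‖ =
    ⟪q (i + 1), NormedSpace.normalize (edge q i)⟫ - ⟪q i, NormedSpace.normalize (edge q i)⟫ := by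
  rw [← inner_sub_left, ← edge]
  rcases eq_or_ne (edge q i) 0 with h | h
  · simp [h]
  · rw [NormedSpace.normalize, inner_smul_right, real_inner_self_eq_norm_sq]
    field_simp

lemma norm_mul_sin_endAngle (h : edge q i ≠ 0) :
    ‖q (i + 1)‖ * sin (endAngle q i) = lineDist q i := by
  have hgram : sin (endAngle q i) * (‖q (i + 1)‖ * ‖edge q i‖) =
      sin (startAngle q i) * (‖q i‖ * ‖edge q i‖) := by
    rw [endAngle, startAngle, sin_angle_mul_norm_mul_norm, sin_angle_mul_norm_mul_norm,
      ← add_edge q i]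
    congr 1
    simp only [inner_add_left, inner_add_right, real_inner_comm (q i) (edge q i)]
    ring
  refine mul_right_cancel₀ (norm_ne_zero_iff.2 h) ?_
  rw [lineDist]
  linear_combination hgram

lemma lineDist_nonneg (q : ℕ → E) (i : ℕ) : 0 ≤ lineDist q i :=
  mul_nonneg (norm_nonneg _) (sin_angle_nonneg _ _)

lemma lineDist_le_norm (q : ℕ → E) (i : ℕ) : lineDist q i ≤ ‖q i‖ :=
  mul_le_of_le_one_right (norm_nonneg _) (sin_le_one _)

/-- A closed polygon `q 0, …, q n, q (n + 1) = q 0` through a point of the open unit ball whose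
other vertices inspect the sphere, satisfying the first-order condition under which rescaling one
of these vertices by a factor `≥ 1` does not shorten it. -/
structure IsCriticalPolygon (q : ℕ → E) (n : ℕ) : Prop where
  closed : q (n + 1) = q 0
  norm_zero_lt : ‖q 0‖ < 1
  edge_ne_zero : ∀ i ≤ n, edge q i ≠ 0
  one_le_norm : ∀ i < n, 1 ≤ ‖q (i + 1)‖
  angle_le : ∀ i < n, endAngle q i ≤ startAngle q (i + 1)
  inspects : Inspects (q '' Icc 1 n)

namespace IsCriticalPolygon

lemma two_mul_volume_ball_le [MeasurableSpace E] [BorelSpace E] [FiniteDimensional ℝ E]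
    [Nontrivial E] (h : IsCriticalPolygon q n) : 2 * volume.real (Metric.ball (0 : E) 1) ≤
      ∑ i ∈ Finset.range (n + 1),
        (capImbalance (q (i + 1)) (edge q i) - capImbalance (q i) (edge q i)) := by
  set f : E → ℕ → ℝ := fun w i ↦ (capCone (q i)).indicator 1 w
  have hf (i : ℕ) : Integrable fun w ↦ |f w (i + 1) - f w i| :=
    ((integrable_indicator_capCone _).sub (integrable_indicator_capCone _)).abs
  have hjumps {w : E} (hw : w ≠ 0) (hw1 : ‖w‖ < 1) :
      2 ≤ ∑ i ∈ Finset.range (n + 1), |f w (i + 1) - f w i| := by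
    obtain ⟨-, ⟨k, hk, rfl⟩, hvis⟩ := h.inspects _ (NormedSpace.norm_normalize hw)
    have h₀ : f w 0 = 0 := indicator_of_notMem (notMem_capCone h.norm_zero_lt hw) _
    have hk1 : f w k = 1 :=
      indicator_of_mem (mem_capCone_of_one_le_inner_normalize hw hw1 hvis) _
    have := two_mul_abs_sub_le_sum_of_eq (f w) (hk.2.trans n.le_succ) (by simp [f, h.closed])
    rwa [h₀, hk1, sub_zero, abs_one, mul_one] at this
  calc 2 * volume.real (Metric.ball (0 : E) 1)
      = ∫ w, (Metric.ball (0 : E) 1).indicator (fun _ ↦ (2 : ℝ)) w := by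
        rw [integral_indicator Metric.isOpen_ball.measurableSet, setIntegral_const, smul_eq_mul,
          mul_comm]
    _ ≤ ∫ w, ∑ i ∈ Finset.range (n + 1), |f w (i + 1) - f w i| := by
        refine integral_mono_ae ?_ (integrable_finsetSum _ fun i _ ↦ hf i) ?_
        · exact (integrable_indicator_iff Metric.isOpen_ball.measurableSet).2
            (integrableOn_const measure_ball_lt_top.ne)
        · filter_upwards [compl_mem_ae_iff.2 (measure_singleton (0 : E))] with w hw
          by_cases hw1 : w ∈ Metric.ball (0 : E) 1
          · rw [indicator_of_mem hw1]
            exact hjumps hw (mem_ball_zero_iff.1 hw1)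
          · rw [indicator_of_notMem hw1]
            positivity
    _ = _ := by
        rw [integral_finsetSum _ fun i _ ↦ hf i]
        refine Finset.sum_congr rfl fun i _ ↦ ?_
        rw [← add_edge q i, capImbalance_add_sub, add_edge]

lemma sum_integral_norm_mul_sin_le (h : IsCriticalPolygon q n) :
    ∑ i ∈ Finset.range n, ∫ t in endAngle q i..startAngle q (i + 1), ‖q (i + 1)‖ * sin t ≤
      polyLength q (n + 1) +
        ‖NormedSpace.normalize (edge q n) - NormedSpace.normalize (edge q 0)‖ := by
  set d : ℕ → E := fun i ↦ NormedSpace.normalize (edge q i)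
  have hturn : ⟪q 0, d 0 - d n⟫ ≤ ‖d n - d 0‖ := by
    rw [norm_sub_rev]
    nlinarith [real_inner_le_norm (q 0) (d 0 - d n), norm_nonneg (d 0 - d n), h.norm_zero_lt]
  calc _ = ∑ i ∈ Finset.range n, (⟪q (i + 1), d i⟫ - ⟪q (i + 1), d (i + 1)⟫) := by
        refine Finset.sum_congr rfl fun i _ ↦ ?_
        rw [intervalIntegral.integral_const_mul, integral_sin, mul_sub, endAngle, startAngle,
          norm_mul_cos_angle, norm_mul_cos_angle]
    _ = polyLength q (n + 1) + ⟪q 0, d 0 - d n⟫ := by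
        simp only [polyLength, norm_eq_inner_normalize_sub, Finset.sum_sub_distrib]
        rw [Finset.sum_range_succ, Finset.sum_range_succ', h.closed, inner_sub_right]
        ring
    _ ≤ _ := by gcongr

lemma four_pi_le_sum_integral_sweepRate {q : ℕ → E3} (h : IsCriticalPolygon q n) :
    4 * π ≤ ∑ i ∈ Finset.range n, ∫ t in endAngle q i..startAngle q (i + 1),
      sweepRate (‖q (i + 1)‖ * sin t) := by
  have hvol : volume.real (Metric.ball (0 : E3) 1) = 4 / 3 * π := by
    rw [measureReal_def, EuclideanSpace.volume_ball_fin_three, ENNReal.toReal_mul,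
      ENNReal.toReal_ofReal (by positivity)]
    norm_num
    ring
  have hvertex : ∑ i ∈ Finset.range n, (capImbalance (q (i + 1)) (edge q i) -
      capImbalance (q (i + 1)) (edge q (i + 1))) ≤ ∑ i ∈ Finset.range n, 2 / 3 *
        ∫ t in endAngle q i..startAngle q (i + 1), sweepRate (‖q (i + 1)‖ * sin t) := by
    refine Finset.sum_le_sum fun i hi ↦ ?_
    have hi := Finset.mem_range.1 hi
    exact capImbalance_sub_le_integral_sweepRate
      (norm_pos_iff.1 (one_pos.trans_le (h.one_le_norm i hi)))
      (h.edge_ne_zero i hi.le) (h.edge_ne_zero (i + 1) hi) (h.angle_le i hi)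
  have hball := h.two_mul_volume_ball_le
  rw [Finset.sum_sub_distrib, Finset.sum_range_succ, Finset.sum_range_succ', h.closed,
    capImbalance_eq_zero h.norm_zero_lt, capImbalance_eq_zero h.norm_zero_lt, hvol] at hball
  rw [Finset.sum_sub_distrib, ← Finset.mul_sum] at hvertex
  linarith

end IsCriticalPolygon

end Polygon

/-! ### The defect of a critical polygon -/

/-- The excess of the trivial bound `p` over the sweeping rate at distance `p`. -/
def sweepDefect (p : ℝ) : ℝ := p - sweepRate p

lemma continuous_sweepDefect : Continuous sweepDefect := continuous_id.sub continuous_sweepRate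

lemma sweepRate_le_of_one_sub_sq_le {p c : ℝ} (hp : 0 ≤ p) (hc : 0 ≤ c)
    (h : 1 ≤ p → 4 * (p ^ 2 - 1) ≤ (c * p ^ 2) ^ 2) : sweepRate p ≤ c * p := by
  rcases le_total p 1 with hp1 | hp1
  · simpa [sweepRate, max_eq_right hp1] using mul_nonneg hc hp
  · have : 0 < p := by linarith
    have : √(1 - p⁻¹ ^ 2) ≤ c * p / 2 := by
      refine Real.sqrt_le_iff.2 ⟨by positivity, ?_⟩
      rw [← mul_le_mul_iff_right₀ (by positivity : 0 < 4 * p ^ 2)]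
      calc 4 * p ^ 2 * (1 - p⁻¹ ^ 2) = 4 * (p ^ 2 - 1) := by field_simp
        _ ≤ _ := (h hp1).trans_eq (by ring)
    rw [sweepRate, max_eq_left hp1]
    linarith

lemma sweepDefect_nonneg {p : ℝ} (hp : 0 ≤ p) : 0 ≤ sweepDefect p := by
  have := sweepRate_le_of_one_sub_sq_le hp zero_le_one fun _ ↦ by nlinarith [sq_nonneg (p ^ 2 - 2)]
  rw [sweepDefect]
  linarith

lemma sweepRate_le_of_le {p : ℝ} (hp : 0 ≤ p) (hp1 : p ≤ 1.1) : sweepRate p ≤ 0.92 * p := by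
  refine sweepRate_le_of_one_sub_sq_le hp (by norm_num) fun _ ↦ ?_
  have : p ^ 2 ≤ 1.21 := by nlinarith
  nlinarith

lemma le_integral_sweepDefect : 0.008 ≤ ∫ p in (1 : ℝ)..1.1, sweepDefect p := by
  calc (0.008 : ℝ) = ∫ _ in (1 : ℝ)..1.1, (0.08 : ℝ) := by
        rw [intervalIntegral.integral_const, smul_eq_mul]
        norm_num
    _ ≤ ∫ p in (1 : ℝ)..1.1, sweepDefect p := by
        refine intervalIntegral.integral_mono_on (by norm_num) intervalIntegrable_const
          (continuous_sweepDefect.intervalIntegrable _ _) fun p hp ↦ ?_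
        have := sweepRate_le_of_le (zero_le_one.trans hp.1) hp.2
        rw [sweepDefect]
        linarith [hp.1]

lemma integral_mul_sin_le {f : ℝ → ℝ} (hf : Continuous f) (hf0 : ∀ p, 0 ≤ p → 0 ≤ f p)
    {r R a b : ℝ} (hr : r ∈ Icc 0 R) (ha : 0 ≤ a) (hb : b ≤ π) (hab : a ≤ b) :
    ∫ p in r * sin a..r * sin b, f p ≤ R * ∫ t in a..b, f (r * sin t) := by
  calc ∫ p in r * sin a..r * sin b, f p
      = ∫ t in a..b, f (r * sin t) * (r * cos t) :=
        (intervalIntegral.integral_comp_mul_deriv (f := fun t ↦ r * sin t)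
          (fun t _ ↦ (hasDerivAt_sin t).const_mul r) (by fun_prop) hf).symm
    _ ≤ ∫ t in a..b, R * f (r * sin t) := by
        refine intervalIntegral.integral_mono_on hab
          (Continuous.intervalIntegrable (by fun_prop) _ _)
          (Continuous.intervalIntegrable (by fun_prop) _ _) fun t ht ↦ ?_
        have hsin := sin_nonneg_of_nonneg_of_le_pi (ha.trans ht.1) (ht.2.trans hb)
        rw [mul_comm]
        gcongr
        · exact hf0 _ (mul_nonneg hr.1 hsin)
        · nlinarith [cos_le_one t, hr.1, hr.2]
    _ = R * ∫ t in a..b, f (r * sin t) := intervalIntegral.integral_const_mul _ _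

section Defect

variable {E : Type*} [NormedAddCommGroup E] [InnerProductSpace ℝ E] {q : ℕ → E} {n i : ℕ} {R t : ℝ}

/-- The loss at the vertex `q (i + 1)`, where the edge direction turns, in the estimate of the
length of a polygon by the area it sweeps. -/
def vertexDefect (q : ℕ → E) (i : ℕ) : ℝ :=
  ∫ t in endAngle q i..startAngle q (i + 1), sweepDefect (‖q (i + 1)‖ * sin t)

lemma norm_mul_sin_nonneg (ht : t ∈ Icc (endAngle q i) (startAngle q (i + 1))) :
    0 ≤ ‖q (i + 1)‖ * sin t :=
  mul_nonneg (norm_nonneg _) <| sin_nonneg_of_nonneg_of_le_pi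
    ((angle_nonneg _ _).trans ht.1) (ht.2.trans (angle_le_pi _ _))

namespace IsCriticalPolygon

lemma vertexDefect_nonneg (h : IsCriticalPolygon q n) (hi : i < n) : 0 ≤ vertexDefect q i :=
  intervalIntegral.integral_nonneg (h.angle_le i hi) fun _ ht ↦
    sweepDefect_nonneg (norm_mul_sin_nonneg ht)

lemma integral_sweepDefect_le_vertexDefect (h : IsCriticalPolygon q n) (hi : i < n)
    (hR : ‖q (i + 1)‖ ≤ R) (ht : t ∈ Icc (endAngle q i) (startAngle q (i + 1))) :
    ∫ p in lineDist q i..‖q (i + 1)‖ * sin t, sweepDefect p ≤ R * vertexDefect q i := by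
  have hcont : Continuous fun t ↦ sweepDefect (‖q (i + 1)‖ * sin t) := by
    have := continuous_sweepDefect
    fun_prop
  rw [← norm_mul_sin_endAngle (h.edge_ne_zero i hi.le)]
  refine (integral_mul_sin_le continuous_sweepDefect (fun _ ↦ sweepDefect_nonneg)
    ⟨norm_nonneg _, hR⟩ (angle_nonneg _ _) (ht.2.trans (angle_le_pi _ _)) ht.1).trans ?_
  have hR0 : 0 ≤ R := (norm_nonneg _).trans hR
  rw [vertexDefect]
  gcongr
  exact intervalIntegral.integral_mono_interval le_rfl ht.1 ht.2
    ((ae_restrict_mem measurableSet_Ioc).mono fun s hs ↦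
      sweepDefect_nonneg (norm_mul_sin_nonneg (Ioc_subset_Icc_self hs)))
    (hcont.intervalIntegrable _ _)

lemma integral_sweepDefect_le_sum (h : IsCriticalPolygon q n) (hR : ∀ i < n, ‖q (i + 1)‖ ≤ R)
    (hi : i ≤ n) : ∫ p in lineDist q 0..lineDist q i, sweepDefect p ≤
      R * ∑ j ∈ Finset.range i, vertexDefect q j := by
  have hint (a b : ℝ) := continuous_sweepDefect.intervalIntegrable (μ := volume) a b
  induction i with
  | zero => simp
  | succ i ih =>
    have hstep := h.integral_sweepDefect_le_vertexDefect hi (hR i hi)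
      (right_mem_Icc.2 (h.angle_le i hi))
    rw [← intervalIntegral.integral_add_adjacent_intervals (hint _ (lineDist q i)) (hint _ _),
      Finset.sum_range_succ, mul_add]
    exact add_le_add (ih (by omega)) hstep

lemma norm_mul_sin_le_of_sum_vertexDefect_lt (h : IsCriticalPolygon q n)
    (hR : ∀ i < n, ‖q (i + 1)‖ ≤ R) (hlt : R * ∑ i ∈ Finset.range n, vertexDefect q i < 0.008)
    (hi : i < n) (ht : t ∈ Icc (endAngle q i) (startAngle q (i + 1))) :
    ‖q (i + 1)‖ * sin t ≤ 1.1 := by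
  have hint (a b : ℝ) := continuous_sweepDefect.intervalIntegrable (μ := volume) a b
  by_contra! hbig
  have hsum : ∑ j ∈ Finset.range (i + 1), vertexDefect q j ≤
      ∑ j ∈ Finset.range n, vertexDefect q j :=
    Finset.sum_le_sum_of_subset_of_nonneg (by simpa using Nat.succ_le_of_lt hi)
      fun j hj _ ↦ h.vertexDefect_nonneg (Finset.mem_range.1 hj)
  have hR0 : 0 ≤ R := (norm_nonneg _).trans (hR i hi)
  have hle : ∫ p in lineDist q 0..‖q (i + 1)‖ * sin t, sweepDefect p ≤
      R * ∑ j ∈ Finset.range n, vertexDefect q j := by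
    rw [← intervalIntegral.integral_add_adjacent_intervals (hint _ (lineDist q i)) (hint _ _)]
    refine (add_le_add (h.integral_sweepDefect_le_sum hR hi.le)
      (h.integral_sweepDefect_le_vertexDefect hi (hR i hi) ht)).trans ?_
    rw [← mul_add, ← Finset.sum_range_succ]
    gcongr
  have hge : 0.008 ≤ ∫ p in lineDist q 0..‖q (i + 1)‖ * sin t, sweepDefect p :=
    le_integral_sweepDefect.trans <| intervalIntegral.integral_mono_interval
      ((lineDist_le_norm q 0).trans h.norm_zero_lt.le) (by norm_num) hbig.le
      ((ae_restrict_mem measurableSet_Ioc).mono fun p hp ↦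
        sweepDefect_nonneg ((lineDist_nonneg q 0).trans hp.1.le)) (hint _ _)
  linarith

lemma sum_vertexDefect_le {q : ℕ → E3} (h : IsCriticalPolygon q n) :
    ∑ i ∈ Finset.range n, vertexDefect q i ≤ polyLength q (n + 1) +
      ‖NormedSpace.normalize (edge q n) - NormedSpace.normalize (edge q 0)‖ - 4 * π := by
  have hrate := continuous_sweepRate
  have hsplit (i : ℕ) : vertexDefect q i =
      (∫ t in endAngle q i..startAngle q (i + 1), ‖q (i + 1)‖ * sin t) -
        ∫ t in endAngle q i..startAngle q (i + 1), sweepRate (‖q (i + 1)‖ * sin t) :=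
    intervalIntegral.integral_sub (Continuous.intervalIntegrable (by fun_prop) _ _)
      (Continuous.intervalIntegrable (by fun_prop) _ _)
  simp only [hsplit, Finset.sum_sub_distrib]
  linarith [h.sum_integral_norm_mul_sin_le, h.four_pi_le_sum_integral_sweepRate]

-- If the defects are small, the lines of the edges stay close to the ball, since `lineDist` can
-- only grow at the expense of the defect; but then the sweeping rate falls short by a factor.
theorem four_pi_add_le {q : ℕ → E3} (h : IsCriticalPolygon q n) (hR : ∀ i < n, ‖q (i + 1)‖ ≤ 20) :
    4 * π + 0.0004 ≤ polyLength q (n + 1) +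
      ‖NormedSpace.normalize (edge q n) - NormedSpace.normalize (edge q 0)‖ := by
  have hrate := continuous_sweepRate
  by_contra! hlt
  have hsmall {i : ℕ} (hi : i < n) {t : ℝ} :=
    h.norm_mul_sin_le_of_sum_vertexDefect_lt (t := t) hR (by linarith [h.sum_vertexDefect_le]) hi
  have hle : ∑ i ∈ Finset.range n,
      (∫ t in endAngle q i..startAngle q (i + 1), sweepRate (‖q (i + 1)‖ * sin t)) ≤
      0.92 * ∑ i ∈ Finset.range n,
        ∫ t in endAngle q i..startAngle q (i + 1), ‖q (i + 1)‖ * sin t := by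
    rw [Finset.mul_sum]
    refine Finset.sum_le_sum fun i hi ↦ ?_
    have hi := Finset.mem_range.1 hi
    rw [← intervalIntegral.integral_const_mul]
    exact intervalIntegral.integral_mono_on (h.angle_le i hi)
      (Continuous.intervalIntegrable (by fun_prop) _ _)
      (Continuous.intervalIntegrable (by fun_prop) _ _)
      fun t ht ↦ sweepRate_le_of_le (norm_mul_sin_nonneg ht) (hsmall hi ht)
  linarith [h.sum_integral_norm_mul_sin_le, h.four_pi_le_sum_integral_sweepRate, pi_gt_three]

end IsCriticalPolygon

end Defect

/-! ### Existence of critical polygons -/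

/-- The polygon obtained from `q` by deleting the vertex `q k`. -/
def eraseVertex {α : Type*} (q : ℕ → α) (k i : ℕ) : α := if i < k then q i else q (i + 1)

lemma eraseVertex_of_lt {α : Type*} {q : ℕ → α} {i k : ℕ} (h : i < k) :
    eraseVertex q k i = q i := if_pos h

lemma eraseVertex_of_le {α : Type*} {q : ℕ → α} {i k : ℕ} (h : k ≤ i) :
    eraseVertex q k i = q (i + 1) := if_neg h.not_gt

section Polygon

variable {E : Type*} [NormedAddCommGroup E] {q : ℕ → E}

lemma polyLength_nonneg (q : ℕ → E) (n : ℕ) : 0 ≤ polyLength q n :=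
  Finset.sum_nonneg fun _ _ ↦ norm_nonneg _

lemma polyLength_succ (q : ℕ → E) (n : ℕ) :
    polyLength q (n + 1) = polyLength q n + ‖edge q n‖ := Finset.sum_range_succ _ _

lemma polyLength_congr {q' : ℕ → E} {n : ℕ} (h : ∀ i ≤ n, q i = q' i) :
    polyLength q n = polyLength q' n :=
  Finset.sum_congr rfl fun i hi ↦ by
    have hi := Finset.mem_range.1 hi
    rw [edge, edge, h i hi.le, h (i + 1) hi]

lemma norm_le_add_polyLength (q : ℕ → E) {i n : ℕ} (hi : i ≤ n) :
    ‖q i‖ ≤ ‖q 0‖ + polyLength q n := by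
  have hpath := dist_le_range_sum_dist q i
  simp only [dist_comm (q _) (q (_ + 1)), dist_comm (q 0), dist_eq_norm] at hpath
  have hinit : polyLength q i ≤ polyLength q n := Finset.sum_le_sum_of_subset_of_nonneg
    (Finset.range_subset_range.2 hi) fun _ _ _ ↦ norm_nonneg _
  linarith [norm_le_norm_add_norm_sub' (q i) (q 0), show _ ≤ polyLength q i from hpath]

lemma continuous_polyLength (n : ℕ) : Continuous fun q : ℕ → E ↦ polyLength q n := by
  unfold polyLength edge
  fun_prop

lemma polyLength_eraseVertex_le (q : ℕ → E) {k m : ℕ} (hkm : k < m) :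
    polyLength (eraseVertex q (k + 1)) m ≤ polyLength q (m + 1) := by
  induction m, (hkm : k + 1 ≤ m) using Nat.le_induction with
  | base =>
    have hshortcut : edge (eraseVertex q (k + 1)) k = edge q k + edge q (k + 1) := by
      rw [edge, eraseVertex_of_le le_rfl, eraseVertex_of_lt k.lt_succ_self, edge, edge]
      abel
    have hinit : polyLength (eraseVertex q (k + 1)) k = polyLength q k :=
      polyLength_congr fun i hi ↦ eraseVertex_of_lt (Nat.lt_succ_of_le hi)
    rw [polyLength_succ, hinit, hshortcut, polyLength_succ, polyLength_succ, add_assoc]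
    gcongr
    exact norm_add_le _ _
  | succ m hm ih =>
    have hlast : edge (eraseVertex q (k + 1)) m = edge q (m + 1) := by
      rw [edge, eraseVertex_of_le (hm.trans m.le_succ), eraseVertex_of_le hm, edge]
    rw [polyLength_succ, polyLength_succ, hlast]
    gcongr

lemma polyLength_update_sub {n k : ℕ} (hk : k < n) (x : E) :
    polyLength (Function.update q (k + 1) x) (n + 1) - polyLength q (n + 1) =
      ‖x - q k‖ + ‖q (k + 2) - x‖ - (‖edge q k‖ + ‖edge q (k + 1)‖) := by
  unfold polyLength edge
  rw [← Finset.sum_sub_distrib, ← Finset.sum_subset (s₁ := {k, k + 1})]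
  · rw [Finset.sum_pair k.lt_succ_self.ne]
    simp
    ring
  · simp only [Finset.insert_subset_iff, Finset.singleton_subset_iff, Finset.mem_range]
    lia
  · intro i _ hi
    simp only [Finset.mem_insert, Finset.mem_singleton, not_or] at hi
    rw [Function.update_of_ne (by lia), Function.update_of_ne (by lia), sub_self]

variable [InnerProductSpace ℝ E]

lemma hasDerivAt_norm_add_smul {y : E} (hy : y ≠ 0) (x : E) :
    HasDerivAt (fun m : ℝ ↦ ‖y + m • x‖) ⟪x, NormedSpace.normalize y⟫ 0 := by
  have hline : HasDerivAt (fun m : ℝ ↦ y + m • x) x 0 := by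
    simpa using ((hasDerivAt_id (0 : ℝ)).smul_const x).const_add y
  have hsqrt := hline.norm_sq.sqrt (by simpa using hy)
  simp only [sqrt_sq (norm_nonneg _)] at hsqrt
  convert hsqrt using 1
  rw [NormedSpace.normalize, inner_smul_right, real_inner_comm]
  simp
  field_simp

lemma inner_normalize_le_inner_normalize {x y z : E} (hxy : x - y ≠ 0) (hzx : z - x ≠ 0)
    (h : ∀ m : ℝ, 0 < m → ‖x - y‖ + ‖z - x‖ ≤ ‖(1 + m) • x - y‖ + ‖z - (1 + m) • x‖) :
    ⟪x, NormedSpace.normalize (z - x)⟫ ≤ ⟪x, NormedSpace.normalize (x - y)⟫ := by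
  have hderiv := (hasDerivAt_norm_add_smul hxy x).add (hasDerivAt_norm_add_smul hzx (-x))
  rw [inner_neg_left, ← sub_eq_add_neg] at hderiv
  refine sub_nonneg.1 (ge_of_tendsto hderiv.tendsto_slope_zero_right ?_)
  filter_upwards [self_mem_nhdsWithin] with m (hm : 0 < m)
  have hx : x - y + m • x = (1 + m) • x - y := by module
  have hz : z - x + m • -x = z - (1 + m) • x := by module
  simp only [Pi.add_apply, zero_add, zero_smul, add_zero, hx, hz, smul_eq_mul]
  exact mul_nonneg (inv_nonneg.2 hm.le) (sub_nonneg.2 (h m hm))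

lemma angle_le_angle_of_inner_normalize_le {x v w : E} (hx : x ≠ 0)
    (h : ⟪x, NormedSpace.normalize w⟫ ≤ ⟪x, NormedSpace.normalize v⟫) : angle x v ≤ angle x w := by
  rw [← norm_mul_cos_angle, ← norm_mul_cos_angle, mul_le_mul_iff_right₀ (norm_pos_iff.2 hx)] at h
  exact (strictAntiOn_cos.le_iff_ge ⟨angle_nonneg _ _, angle_le_pi _ _⟩
    ⟨angle_nonneg _ _, angle_le_pi _ _⟩).1 h

lemma Inspects.one_le_of_image_Icc [Nontrivial E] {n : ℕ} (h : Inspects (q '' Icc 1 n)) :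
    1 ≤ n := by
  obtain ⟨u, hu⟩ := exists_norm_eq E zero_le_one
  obtain ⟨-, ⟨i, hi, -⟩, -⟩ := h u hu
  exact hi.1.trans hi.2

/-- A closed polygon `q 0, …, q n, q (n + 1) = q 0` with base point `o` whose vertices other than
the base point inspect the sphere. -/
structure IsInspectingPolygon (o : E) (n : ℕ) (q : ℕ → E) : Prop where
  zero : q 0 = o
  last : q (n + 1) = o
  inspects : Inspects (q '' Icc 1 n)

namespace IsInspectingPolygon

variable {o : E} {n k : ℕ}

lemma congr (h : IsInspectingPolygon o n q) {q' : ℕ → E} (hq : ∀ i ≤ n + 1, q i = q' i) :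
    IsInspectingPolygon o n q' where
  zero := (hq 0 (Nat.zero_le _)).symm.trans h.zero
  last := (hq _ le_rfl).symm.trans h.last
  inspects := by
    rw [← image_congr fun i (hi : i ∈ Icc 1 n) ↦ hq i (hi.2.trans n.le_succ)]
    exact h.inspects

lemma isClosed_setOf (o : E) (n : ℕ) : IsClosed {q | IsInspectingPolygon o n q} := by
  have hsetOf : {q | IsInspectingPolygon o n q} = {q | q 0 = o} ∩ {q | q (n + 1) = o} ∩
      ⋂ u ∈ Metric.sphere (0 : E) 1, ⋃ i ∈ Icc 1 n, {q | 1 ≤ ⟪q i, u⟫} := by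
    ext q
    simp only [mem_inter_iff, mem_iInter, mem_iUnion, mem_sphere_zero_iff_norm, mem_ofPred_eq]
    refine ⟨fun h ↦ ⟨⟨h.zero, h.last⟩, fun u hu ↦ ?_⟩, fun h ↦ ⟨h.1.1, h.1.2, fun u hu ↦ ?_⟩⟩
    · simpa using h.inspects u hu
    · simpa using h.2 u hu
  rw [hsetOf]
  refine ((isClosed_eq (continuous_apply 0) continuous_const).inter
    (isClosed_eq (continuous_apply _) continuous_const)).inter ?_
  exact isClosed_biInter fun u _ ↦ (finite_Icc 1 n).isClosed_biUnion fun i _ ↦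
    isClosed_le continuous_const ((continuous_apply i).inner continuous_const)

lemma exists_forall_polyLength_le [FiniteDimensional ℝ E] (h : IsInspectingPolygon o n q) :
    ∃ p, IsInspectingPolygon o n p ∧
      ∀ p', IsInspectingPolygon o n p' → polyLength p (n + 1) ≤ polyLength p' (n + 1) := by
  let truncate (p : ℕ → E) (i : ℕ) : E := p (min i (n + 1))
  have htruncate (p : ℕ → E) : ∀ i ≤ n + 1, p i = truncate p i := fun i hi ↦ by
    simp only [truncate, min_eq_left hi]
  let K : Set (ℕ → E) :=
    univ.pi fun _ ↦ Metric.closedBall 0 (‖o‖ + polyLength q (n + 1))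
  have hmem {p : ℕ → E} (hp : IsInspectingPolygon o n p)
      (hpq : polyLength p (n + 1) ≤ polyLength q (n + 1)) :
      truncate p ∈ K ∩ {p | IsInspectingPolygon o n p} :=
    ⟨fun i _ ↦ mem_closedBall_zero_iff.2 (by
      linarith [norm_le_add_polyLength p (min_le_right i (n + 1)), congrArg norm hp.zero]),
      hp.congr (htruncate p)⟩
  have hK : IsCompact (K ∩ {p | IsInspectingPolygon o n p}) :=
    (isCompact_univ_pi fun _ ↦ isCompact_closedBall _ _).inter_right (isClosed_setOf o n)
  obtain ⟨p, ⟨-, hp⟩, hmin⟩ := hK.exists_isMinOn ⟨_, hmem h le_rfl⟩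
    (continuous_polyLength (n + 1)).continuousOn
  have hle {p' : ℕ → E} (hp' : IsInspectingPolygon o n p')
      (hpq : polyLength p' (n + 1) ≤ polyLength q (n + 1)) :
      polyLength p (n + 1) ≤ polyLength p' (n + 1) := by
    rw [polyLength_congr (htruncate p')]
    exact hmin (hmem hp' hpq)
  refine ⟨p, hp, fun p' hp' ↦ ?_⟩
  rcases le_total (polyLength p' (n + 1)) (polyLength q (n + 1)) with hpq | hpq
  · exact hle hp' hpq
  · exact (hle h le_rfl).trans hpq

lemma eraseVertex (h : IsInspectingPolygon o (n + 1) q) (hk : k ≤ n)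
    (hs : Inspects (q '' (Icc 1 (n + 1) \ {k + 1}))) :
    IsInspectingPolygon o n (eraseVertex q (k + 1)) where
  zero := by rw [eraseVertex_of_lt k.succ_pos, h.zero]
  last := by rw [eraseVertex_of_le (Nat.succ_le_succ hk), h.last]
  inspects := hs.mono <| by
    rintro - ⟨i, ⟨⟨hi1, hin⟩, hik : i ≠ k + 1⟩, rfl⟩
    rcases hik.lt_or_gt with hik | hik
    · exact ⟨i, ⟨hi1, by lia⟩, eraseVertex_of_lt hik⟩
    · obtain ⟨i, rfl⟩ := Nat.exists_eq_add_of_le' hi1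
      exact ⟨i, ⟨by lia, by lia⟩, eraseVertex_of_le (by lia)⟩

lemma update_smul (h : IsInspectingPolygon o n q) (hk : k < n) {m : ℝ} (hm : 0 < m) :
    IsInspectingPolygon o n (Function.update q (k + 1) ((1 + m) • q (k + 1))) where
  zero := by rw [Function.update_of_ne k.succ_ne_zero.symm, h.zero]
  last := by rw [Function.update_of_ne (by lia), h.last]
  inspects u hu := by
    obtain ⟨-, ⟨i, hi, rfl⟩, hvis⟩ := h.inspects u hu
    refine ⟨_, ⟨i, hi, rfl⟩, ?_⟩
    rcases eq_or_ne i (k + 1) with rfl | hik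
    · rw [Function.update_self, real_inner_smul_left]
      nlinarith
    · rwa [Function.update_of_ne hik]

/-- No vertex of the inspecting polygon `q 0, …, q (n + 1)` can be deleted. -/
def IsIrredundant (q : ℕ → E) (n : ℕ) : Prop := ∀ k ∈ Icc 1 n, ¬ Inspects (q '' (Icc 1 n \ {k}))

lemma exists_inner_lt_of_isIrredundant (h : IsInspectingPolygon o n q) (hq : IsIrredundant q n)
    (hk : k ∈ Icc 1 n) :
    ∃ u : E, ‖u‖ = 1 ∧ 1 ≤ ⟪q k, u⟫ ∧ ∀ i ∈ Icc 1 n, i ≠ k → ⟪q i, u⟫ < 1 := by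
  have hblind := hq k hk
  simp only [Inspects, not_forall, not_exists, not_and, not_le] at hblind
  obtain ⟨u, hu, hblind⟩ := hblind
  obtain ⟨-, ⟨i, hi, rfl⟩, hvis⟩ := h.inspects u hu
  obtain rfl : i = k := by
    by_contra hik
    exact (hblind _ ⟨i, ⟨hi, hik⟩, rfl⟩).not_ge hvis
  exact ⟨u, hu, hvis, fun j hj hji ↦ hblind _ ⟨j, ⟨hj, hji⟩, rfl⟩⟩

lemma one_le_norm_of_isIrredundant (h : IsInspectingPolygon o n q) (hq : IsIrredundant q n)
    (hk : k ∈ Icc 1 n) : 1 ≤ ‖q k‖ := by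
  obtain ⟨u, hu, hvis, -⟩ := h.exists_inner_lt_of_isIrredundant hq hk
  have hCS := real_inner_le_norm (q k) u
  rw [hu, mul_one] at hCS
  exact hvis.trans hCS

lemma edge_ne_zero_of_isIrredundant [Nontrivial E] (h : IsInspectingPolygon o n q)
    (hq : IsIrredundant q n) (ho : ‖o‖ < 1) (hk : k ≤ n) : edge q k ≠ 0 := by
  intro hedge
  have heq : q (k + 1) = q k := sub_eq_zero.1 hedge
  rcases k.eq_zero_or_pos with rfl | hk0
  · have := h.one_le_norm_of_isIrredundant hq ⟨le_rfl, h.inspects.one_le_of_image_Icc⟩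
    rw [heq, h.zero] at this
    exact ho.not_ge this
  rcases hk.eq_or_lt with rfl | hkn
  · have := h.one_le_norm_of_isIrredundant hq ⟨hk0, le_rfl⟩
    rw [← heq, h.last] at this
    exact ho.not_ge this
  · obtain ⟨u, -, hvis, hblind⟩ := h.exists_inner_lt_of_isIrredundant hq ⟨hk0, hk⟩
    have := hblind (k + 1) ⟨k.succ_pos, hkn⟩ k.succ_ne_self
    rw [heq] at this
    exact this.not_ge hvis

lemma endAngle_le_startAngle (h : IsInspectingPolygon o n q)
    (hmin : ∀ p, IsInspectingPolygon o n p → polyLength q (n + 1) ≤ polyLength p (n + 1))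
    (hk : k < n) (hne : q (k + 1) ≠ 0) (hedge : ∀ i ≤ n, edge q i ≠ 0) :
    endAngle q k ≤ startAngle q (k + 1) := by
  refine angle_le_angle_of_inner_normalize_le hne
    (inner_normalize_le_inner_normalize (hedge k hk.le) (hedge (k + 1) hk) fun m hm ↦ ?_)
  have hscaled := hmin _ (h.update_smul hk hm)
  have hdiff := polyLength_update_sub (q := q) hk ((1 + m) • q (k + 1))
  unfold edge at hdiff
  linarith

lemma isCriticalPolygon [Nontrivial E] (h : IsInspectingPolygon o n q) (hq : IsIrredundant q n)
    (hmin : ∀ p, IsInspectingPolygon o n p → polyLength q (n + 1) ≤ polyLength p (n + 1))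
    (ho : ‖o‖ < 1) : IsCriticalPolygon q n :=
  have hedge (i : ℕ) (hi : i ≤ n) : edge q i ≠ 0 := h.edge_ne_zero_of_isIrredundant hq ho hi
  have hone (i : ℕ) (hi : i < n) : 1 ≤ ‖q (i + 1)‖ :=
    h.one_le_norm_of_isIrredundant hq ⟨i.succ_pos, hi⟩
  { closed := h.last.trans h.zero.symm
    norm_zero_lt := h.zero ▸ ho
    edge_ne_zero := hedge
    one_le_norm := hone
    angle_le := fun i hi ↦ h.endAngle_le_startAngle hmin hi
      (norm_pos_iff.1 (one_pos.trans_le (hone i hi))) hedge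
    inspects := h.inspects }

lemma exists_isCriticalPolygon [FiniteDimensional ℝ E] [Nontrivial E]
    (h : IsInspectingPolygon o n q) (ho : ‖o‖ < 1) :
    ∃ m p, IsCriticalPolygon p m ∧ p 0 = o ∧ polyLength p (m + 1) ≤ polyLength q (n + 1) := by
  classical
  let P (m : ℕ) : Prop :=
    ∃ p, IsInspectingPolygon o m p ∧ polyLength p (m + 1) ≤ polyLength q (n + 1)
  have hP : ∃ m, P m := ⟨n, q, h, le_rfl⟩
  obtain ⟨m, ⟨p₀, hp₀, hp₀q⟩, hfewest⟩ : ∃ m, P m ∧ ∀ l < m, ¬ P l :=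
    ⟨Nat.find hP, Nat.find_spec hP, fun _ ↦ Nat.find_min hP⟩
  obtain ⟨p, hp, hpmin⟩ := hp₀.exists_forall_polyLength_le
  have hpq := (hpmin p₀ hp₀).trans hp₀q
  have hirr : IsIrredundant p m := by
    rintro k ⟨hk1, hkm⟩ hs
    obtain ⟨k, rfl⟩ := Nat.exists_eq_add_of_le' hk1
    obtain ⟨l, rfl⟩ := Nat.exists_eq_add_of_le' (hk1.trans hkm)
    have hk : k < l + 1 := hkm
    exact hfewest l l.lt_succ_self ⟨_, hp.eraseVertex (Nat.le_of_lt_succ hk) hs,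
      (polyLength_eraseVertex_le p hk).trans hpq⟩
  exact ⟨m, p, hp.isCriticalPolygon hirr hpmin ho, hp.zero, hpq⟩

end IsInspectingPolygon

end Polygon

/-! ### Minimal curves avoid the open ball -/

lemma exists_partition_dist_lt {X : Type*} [PseudoMetricSpace X] {γ : ℝ → X} {a b δ : ℝ}
    (hab : a ≤ b) (hγ : ContinuousOn γ (Icc a b)) (hδ : 0 < δ) :
    ∃ (u : ℕ → ℝ) (n : ℕ), Monotone u ∧ (∀ i, u i ∈ Icc a b) ∧ u 0 = a ∧ u (n + 1) = b ∧
      ∀ s ∈ Icc a b, ∃ i ≤ n + 1, dist (γ s) (γ (u i)) < δ := by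
  have hcover (x : Icc a b) : x ∈ {t : Icc a b | dist (γ t) (γ x) < δ / 2} := by simpa using hδ
  obtain ⟨u, hu0, hu, ⟨n, hn⟩, hsub⟩ := exists_monotone_Icc_subset_open_cover_Icc hab
    (c := fun x : Icc a b ↦ {t : Icc a b | dist (γ t) (γ x) < δ / 2})
    (fun x ↦ isOpen_lt ((continuousOn_iff_continuous_domRestrict.1 hγ).dist continuous_const)
      continuous_const) fun x _ ↦ mem_iUnion.2 ⟨x, hcover x⟩
  refine ⟨fun i ↦ u i, n, hu, fun i ↦ (u i).2, hu0, hn (n + 1) n.le_succ, fun s hs ↦ ?_⟩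
  have hex : ∃ i, s ≤ u i := ⟨n + 1, (hn (n + 1) n.le_succ).symm ▸ hs.2⟩
  refine ⟨Nat.find hex, Nat.find_min' hex ((hn (n + 1) n.le_succ).symm ▸ hs.2), ?_⟩
  have hsi := Nat.find_spec hex
  rcases hi : Nat.find hex with _ | i
  · obtain rfl : s = u 0 := le_antisymm (hi ▸ hsi) (hu0.symm ▸ hs.1)
    simpa using hδ
  · have hlt : u i < s := not_le.1 (Nat.find_min hex (hi.symm ▸ i.lt_succ_self))
    obtain ⟨x, hx⟩ := hsub i
    have hsx : dist (γ s) (γ x) < δ / 2 := hx (a := ⟨s, hs⟩) ⟨hlt.le, hi ▸ hsi⟩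
    have hux : dist (γ (u (i + 1))) (γ x) < δ / 2 := hx ⟨hu i.le_succ, le_rfl⟩
    linarith [dist_triangle_right (γ s) (γ (u (i + 1))) (γ x)]

section Inscribed

variable {E : Type*} [NormedAddCommGroup E]

lemma polyLength_comp_le {γ : ℝ → E} {s : Set ℝ} {u : ℕ → ℝ} (hs : eVariationOn γ s ≠ ⊤)
    (hu : Monotone u) (hus : ∀ i, u i ∈ s) (n : ℕ) :
    polyLength (γ ∘ u) n ≤ (eVariationOn γ s).toReal := by
  rw [← ENNReal.ofReal_le_iff_le_toReal hs, polyLength,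
    ENNReal.ofReal_sum_of_nonneg fun _ _ ↦ norm_nonneg _]
  simpa only [edge, ← dist_eq_norm, ← edist_dist, Function.comp_apply] using
    eVariationOn.sum_le_of_monotoneOn_Iic (f := γ) (n := n) (hu.monotoneOn _) fun i _ ↦ hus i

lemma polyLength_smul [NormedSpace ℝ E] {c : ℝ} (hc : 0 ≤ c) (q : ℕ → E) (n : ℕ) :
    polyLength (c • q) n = c * polyLength q n := by
  simp only [polyLength, edge, Pi.smul_apply, ← smul_sub, norm_smul, norm_of_nonneg hc,
    Finset.mul_sum]

lemma ArcThrough.polygon [NormedSpace ℝ E] (q : ℕ → E) (n : ℕ) :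
    ArcThrough (q '' Icc 0 n) (q 0) (q n) (ENNReal.ofReal (polyLength q n)) := by
  induction n with
  | zero => simpa [polyLength] using ArcThrough.segment (q 0) (q 0)
  | succ n ih =>
    refine (ih.trans (ArcThrough.segment (q n) (q (n + 1)))).mono ?_ ?_
    · rintro - ⟨i, ⟨hi0, hi⟩, rfl⟩
      rcases hi.eq_or_lt with rfl | hi
      · exact Or.inr (mem_insert_of_mem _ rfl)
      · exact Or.inl ⟨i, ⟨hi0, Nat.le_of_lt_succ hi⟩, rfl⟩
    · rw [polyLength_succ, ENNReal.ofReal_add (polyLength_nonneg _ _) (norm_nonneg _), edge,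
        dist_comm, dist_eq_norm]

variable [InnerProductSpace ℝ E] {γ : ℝ → E} {a b : ℝ}

lemma isInspectingPolygon_smul_of_dist_lt {q : ℕ → E} {n : ℕ} {S : Set E} {δ : ℝ}
    (hS : Inspects S) (hq : q (n + 1) = q 0) (hδ : ‖q 0‖ < 1 - δ)
    (hdist : ∀ x ∈ S, ∃ i ≤ n + 1, dist x (q i) < δ) :
    IsInspectingPolygon ((1 - δ)⁻¹ • q 0) n ((1 - δ)⁻¹ • q) where
  zero := rfl
  last := congrArg ((1 - δ)⁻¹ • ·) hq
  inspects w hw := by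
    obtain ⟨x, hx, hvis⟩ := hS w hw
    obtain ⟨i, hi, hxi⟩ := hdist x hx
    have hCS : ⟪x - q i, w⟫ ≤ δ := by
      have := real_inner_le_norm (x - q i) w
      rw [hw, mul_one, ← dist_eq_norm] at this
      exact this.trans hxi.le
    have hnear : 1 - δ ≤ ⟪q i, w⟫ := by
      rw [inner_sub_left] at hCS
      linarith
    have hbase : q i ≠ q 0 := by
      intro h
      have := real_inner_le_norm (q i) w
      rw [hw, mul_one, h] at this
      linarith [h ▸ hnear]
    refine ⟨_, ⟨i, ⟨Nat.one_le_iff_ne_zero.2 ?_, Nat.le_of_lt_succ (hi.lt_of_ne ?_)⟩, rfl⟩, ?_⟩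
    · rintro rfl
      exact hbase rfl
    · rintro rfl
      exact hbase hq
    · rwa [Pi.smul_apply, real_inner_smul_left, inv_mul_eq_div,
        one_le_div ((norm_nonneg _).trans_lt hδ)]

lemma exists_isInspectingPolygon_polyLength_le (hab : a ≤ b) (hγ : ContinuousOn γ (Icc a b))
    (hclosed : γ a = γ b) (hlen : eVariationOn γ (Icc a b) ≠ ⊤) (hs : Inspects (γ '' Icc a b))
    {r ε : ℝ} (ha : ‖γ a‖ < 1) (hr : ‖γ a‖ < r) (hε : 0 < ε) :
    ∃ (o : E) (n : ℕ) (q : ℕ → E), ‖o‖ ≤ r ∧ IsInspectingPolygon o n q ∧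
      polyLength q (n + 1) ≤ (eVariationOn γ (Icc a b)).toReal + ε := by
  set V := (eVariationOn γ (Icc a b)).toReal
  obtain ⟨δ, hδ, haδ, hrδ, hVδ⟩ : ∃ δ > 0, ‖γ a‖ < 1 - δ ∧ (1 - δ)⁻¹ * ‖γ a‖ < r ∧
      (1 - δ)⁻¹ * V < V + ε := by
    have hlim : Tendsto (fun δ : ℝ ↦ 1 - δ) (𝓝[>] 0) (𝓝 1) :=
      (Continuous.tendsto' (by fun_prop) _ _ (by simp)).mono_left nhdsWithin_le_nhds
    have hinv (c : ℝ) : Tendsto (fun δ : ℝ ↦ (1 - δ)⁻¹ * c) (𝓝[>] 0) (𝓝 c) := by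
      simpa using (hlim.inv₀ one_ne_zero).mul_const c
    exact ((eventually_mem_nhdsWithin (s := Ioi 0)).and ((hlim.eventually (lt_mem_nhds ha)).and
      (((hinv _).eventually (gt_mem_nhds hr)).and
        ((hinv V).eventually (gt_mem_nhds (lt_add_of_pos_right V hε)))))).exists
  have hκ : 0 ≤ (1 - δ)⁻¹ := inv_nonneg.2 ((norm_nonneg _).trans haδ.le)
  obtain ⟨u, n, hu, huab, hu0, hun, hdist⟩ := exists_partition_dist_lt hab hγ hδ
  have hq0 : (γ ∘ u) 0 = γ a := congrArg γ hu0
  refine ⟨_, n, _, ?_, isInspectingPolygon_smul_of_dist_lt (q := γ ∘ u) hs ?_ (hq0 ▸ haδ) ?_, ?_⟩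
  · rw [norm_smul, norm_of_nonneg hκ, hq0]
    exact hrδ.le
  · rw [hq0, hclosed, Function.comp_apply, hun]
  · rwa [forall_mem_image]
  · rw [polyLength_smul hκ]
    exact (mul_le_mul_of_nonneg_left (polyLength_comp_le hlen hu huab _) hκ).trans hVδ.le

lemma mul_sq_norm_normalize_sub {x y : E} (hx : x ≠ 0) (hy : y ≠ 0) :
    ‖x‖ * ‖y‖ * ‖NormedSpace.normalize x - NormedSpace.normalize y‖ ^ 2 =
      (‖x‖ + ‖y‖) ^ 2 - ‖x + y‖ ^ 2 := by
  rw [norm_sub_sq_real, NormedSpace.norm_normalize hx, NormedSpace.norm_normalize hy,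
    NormedSpace.normalize, NormedSpace.normalize, inner_smul_left, inner_smul_right,
    norm_add_sq_real]
  simp
  field_simp
  ring

lemma mul_sq_norm_normalize_sub_le {x y : E} {d ε : ℝ} (hd : 0 < d) (hx : d ≤ ‖x‖)
    (hy : d ≤ ‖y‖) (h : ‖x‖ + ‖y‖ ≤ ‖x + y‖ + ε) :
    d * ‖NormedSpace.normalize x - NormedSpace.normalize y‖ ^ 2 ≤ 4 * ε := by
  have hx0 : 0 < ‖x‖ := hd.trans_le hx
  have hy0 : 0 < ‖y‖ := hd.trans_le hy
  have hxy : 0 < ‖x‖ * ‖y‖ := mul_pos hx0 hy0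
  have hadd := norm_add_le x y
  have hharmonic : d * (‖x‖ + ‖y‖) ≤ 2 * (‖x‖ * ‖y‖) := by nlinarith
  refine le_of_mul_le_mul_left ?_ hxy
  calc ‖x‖ * ‖y‖ * (d * ‖NormedSpace.normalize x - NormedSpace.normalize y‖ ^ 2)
      = d * ((‖x‖ + ‖y‖ - ‖x + y‖) * (‖x‖ + ‖y‖ + ‖x + y‖)) := by
        rw [mul_left_comm,
          mul_sq_norm_normalize_sub (norm_pos_iff.1 hx0) (norm_pos_iff.1 hy0)]
        ring
    _ ≤ d * (ε * (‖x‖ + ‖y‖ + (‖x‖ + ‖y‖))) := by gcongr <;> linarith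
    _ = 2 * ε * (d * (‖x‖ + ‖y‖)) := by ring
    _ ≤ 2 * ε * (2 * (‖x‖ * ‖y‖)) := by
        gcongr
        linarith
    _ = ‖x‖ * ‖y‖ * (4 * ε) := by ring

lemma IsCriticalPolygon.one_sub_norm_le_norm_edge_zero [Nontrivial E] {q : ℕ → E} {n : ℕ}
    (h : IsCriticalPolygon q n) : 1 - ‖q 0‖ ≤ ‖edge q 0‖ :=
  (sub_le_sub_right (h.one_le_norm 0 h.inspects.one_le_of_image_Icc) _).trans
    (norm_sub_norm_le (q 1) (q 0))

lemma IsCriticalPolygon.one_sub_norm_le_norm_edge_last [Nontrivial E] {q : ℕ → E} {n : ℕ}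
    (h : IsCriticalPolygon q n) : 1 - ‖q 0‖ ≤ ‖edge q n‖ := by
  obtain ⟨m, rfl⟩ := Nat.exists_eq_add_of_le' h.inspects.one_le_of_image_Icc
  rw [edge, h.closed, norm_sub_rev]
  exact (sub_le_sub_right (h.one_le_norm m m.lt_succ_self) _).trans (norm_sub_norm_le _ _)

end Inscribed

namespace IsMinimalInspection

variable {a b : ℝ} {γ : ℝ → E3} {q : ℕ → E3} {n : ℕ}

lemma toReal_length_le_polyLength (h : IsMinimalInspection a b γ) (hq : Inspects (q '' Icc 0 n)) :
    (eVariationOn γ (Icc a b)).toReal ≤ polyLength q n + ‖q 0 - q n‖ := by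
  have hlen := h.length_le_of_arcThrough (hq.mono subset_union_left)
    ((ArcThrough.polygon q n).trans (ArcThrough.segment (q n) (q 0)))
  rw [dist_comm, dist_eq_norm, ← ENNReal.ofReal_add (polyLength_nonneg q n) (norm_nonneg _)] at hlen
  exact ENNReal.toReal_le_of_le_ofReal (add_nonneg (polyLength_nonneg q n) (norm_nonneg _)) hlen

lemma toReal_length_add_le (h : IsMinimalInspection a b γ) (hq : IsCriticalPolygon q n) :
    (eVariationOn γ (Icc a b)).toReal + ‖edge q 0‖ + ‖edge q n‖ ≤
      polyLength q (n + 1) + ‖edge q n + edge q 0‖ := by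
  obtain ⟨m, rfl⟩ := Nat.exists_eq_add_of_le' hq.inspects.one_le_of_image_Icc
  have hshift : (fun i ↦ q (i + 1)) '' Icc 0 m = q '' Icc 1 (m + 1) := by
    rw [← zero_add 1, ← image_add_const_Icc, image_image]
  have hshortcut := h.toReal_length_le_polyLength (hshift ▸ hq.inspects)
  have hchord : q 1 - q (m + 1) = edge q (m + 1) + edge q 0 := by
    rw [edge, edge, hq.closed]
    abel
  have hsplit : polyLength q (m + 2) =
      polyLength (fun i ↦ q (i + 1)) m + ‖edge q 0‖ + ‖edge q (m + 1)‖ := by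
    rw [polyLength_succ, polyLength, Finset.sum_range_succ']
    rfl
  rw [zero_add, hchord] at hshortcut
  linarith

/- If `‖γ a‖ < 1`, a critical polygon based near `γ a` is barely longer than `γ`. Bypassing its
base point leaves an inspecting polygon, so the bypass gains little and the two edges at the base
point are almost parallel; but then the polygon is longer than `4π` by a fixed amount. -/
lemma one_le_norm_left (h : IsMinimalInspection a b γ) : 1 ≤ ‖γ a‖ := by
  by_contra! ha
  set d := (1 - ‖γ a‖) / 2 with hd
  have hd0 : 0 < d := by linarith
  have hd1 : d ≤ 1 := by linarith [norm_nonneg (γ a)]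
  have hlen : (eVariationOn γ (Icc a b)).toReal ≤ 4 * π :=
    ENNReal.toReal_le_of_le_ofReal (by positivity) h.length_le_four_pi
  obtain ⟨o, n₀, q₀, hor, hq₀, hlen₀⟩ :=
    exists_isInspectingPolygon_polyLength_le h.1.1.le h.1.2.1 h.1.2.2.1 h.1.2.2.2.1 h.1.inspects
      ha (show ‖γ a‖ < 1 - d by linarith) (show 0 < 1e-8 * d by positivity)
  obtain ⟨n, q, hq, rfl, hle⟩ := hq₀.exists_isCriticalPolygon (by linarith)
  have hbypass := h.toReal_length_add_le hq
  have hlong := hq.four_pi_add_le fun i hi ↦ by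
    have := norm_le_add_polyLength q (Nat.succ_le_succ hi.le)
    norm_num at hlen₀
    linarith [pi_lt_d2]
  have hedge₀ : d ≤ ‖edge q 0‖ := by linarith [hq.one_sub_norm_le_norm_edge_zero]
  have hedge : d ≤ ‖edge q n‖ := by linarith [hq.one_sub_norm_le_norm_edge_last]
  have hturn := mul_sq_norm_normalize_sub_le (ε := 1e-8 * d) hd0 hedge hedge₀ (by linarith)
  have hparallel : ‖NormedSpace.normalize (edge q n) - NormedSpace.normalize (edge q 0)‖ ≤
      2e-4 :=
    (sq_le_sq₀ (norm_nonneg _) (by norm_num)).1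
      (le_of_mul_le_mul_left (hturn.trans_eq (by ring)) hd0)
  norm_num at hparallel hlen₀ hlong
  linarith

lemma one_le_norm (h : IsMinimalInspection a b γ) {t : ℝ} (ht : t ∈ Icc a b) : 1 ≤ ‖γ t‖ := by
  have := (h.rotate ht).one_le_norm_left
  rwa [curveConcat_eqOn_left ht.2] at this

end IsMinimalInspection

theorem minimal_inspection_tangent_lines_avoid_ball_general {a b : ℝ} {γ : ℝ → E3}
    (hmin : IsMinimalInspection a b γ) :
    (∀ t ∈ Icc a b, 1 ≤ ‖γ t‖) ∧ ∀ t ∈ Ioo a b, ∀ v : E3, HasDerivAt γ v t →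
      (∀ s : ℝ, 1 ≤ ‖γ t + s • v‖) ∧ ⟪γ t, v⟫ ^ 2 ≤ ‖v‖ ^ 2 * (‖γ t‖ ^ 2 - 1) := by
  have hout : ∀ t ∈ Icc a b, 1 ≤ ‖γ t‖ := fun t ↦ hmin.one_le_norm
  refine ⟨hout, fun t ht v hv ↦ ?_⟩
  have hline := hmin.one_le_norm_add_smul hout ht hv
  exact ⟨hline, sq_inner_le_of_forall_one_le_norm_add_smul hline⟩

/-- A constant speed minimal inspection curve lies outside the open unit ball, and at
almost every differentiable point with nonvanishing derivative its tangent line avoids the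
open unit ball; equivalently `⟨γ,γ′⟩² ≤ |γ′|²(|γ|² − 1)`, i.e. the angle `α(t)` between
`γ(t)` and `γ′(t)` is at least `arcsin(1/|γ(t)|)`. -/
theorem minimal_inspection_tangent_lines_avoid_ball
    (a b : ℝ) (γ : ℝ → E3) (C : ℝ≥0)
    (hmin : IsMinimalInspection a b γ)
    (hspeed : HasConstantSpeedOnWith γ (Set.Icc a b) C) :
    (∀ t ∈ Set.Icc a b, 1 ≤ ‖γ t‖) ∧
    (∀ᵐ t ∂(volume.restrict (Set.Icc a b)), ∀ v : E3, v ≠ 0 →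
      HasDerivWithinAt γ v (Set.Icc a b) t →
        (∀ s : ℝ, 1 ≤ ‖γ t + s • v‖) ∧
          ⟪γ t, v⟫ ^ 2 ≤ ‖v‖ ^ 2 * (‖γ t‖ ^ 2 - 1)) := by
  obtain ⟨hout, htangent⟩ := minimal_inspection_tangent_lines_avoid_ball_general hmin
  refine ⟨hout, ?_⟩
  rw [← restrict_Ioo_eq_restrict_Icc]
  filter_upwards [ae_restrict_mem measurableSet_Ioo] with t ht v _ hv
  exact htangent t ht v (hv.hasDerivAt (Icc_mem_nhds ht.1 ht.2))
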